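/- arXiv:1508.00464 — 2 statements merged into one kernel-verified Lean document; each statement's English description precedes it below -/
import Mathlib

section
/- Let (S_n)_{n≥1} be a time-homogeneous Markov process of Steiner symmetrization directions in ℝP^{d-1} with transition function P and iterated kernels P^n. Suppose there exists ℓ ∈ ℝP^{d-1} such that: (i) (Recurrence) for every nonempty open set O ⊆ ℝP^{d-1} containing ℓ, almost surely (S_n)_{n≥1} enters O infinitely often; (ii) (Continuity) for every n ≥ 1 and every open set O ⊆ (ℝP^{d-1})^n, the map s ↦ P^n_s(O) is lower semicontinuous at ℓ; (iii) (Discrimination) for every Lebesgue measurable set X ⊆ ℝ^d of finite measure with m(X Δ X⋆) > 0, one has Σ_{n≥1} P^n_ℓ((ℝP^{d-1})^{n-1} × {u : m(X Δ X^u) > 0}) > 0. Then for every Lebesgue measurable set X ⊆ ℝ^d of finite measure, the sequence (X^{S_1…S_n})_{n≥1} converges almost surely in measure to X⋆. -/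
/-!
The proof rests on a Lyapunov functional: the energy `∫_A exp (-‖x‖²) dx`. By the bathtub principle
on lines, a Steiner symmetrization never decreases the energy, and it increases it strictly unless
it moves `A` by a null set only (`energy_op`). Along the process the energy is thus monotone, and it
is bounded by the volume of the set.

*Contractions.* Symmetrization preserves volume and inclusions, so it is `1`-Lipschitz for the
distance in measure `m(A Δ B)`; so is the spherical rearrangement. Hence it suffices to treat compact
sets `K`, by inner regularity (`symmDiff_iter_star_le`). Moreover `n ↦ m(Xₙ Δ K⋆)` is nonincreasing,
as symmetrization fixes balls, so it only needs to be small once.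

*Compactness.* All the symmetrals of `K` lie in the class `Cls K R` of subsets of a ball having the
volume of `K` and thickenings no larger than those of `K`; the latter is stable under symmetrization
by the one-dimensional Brunn–Minkowski inequality (`thickening_op_subset`). Blaschke selection makes
the class precompact in measure (`exists_subseq`). If `C` is a limit with `m(C Δ C⋆) > 0`, then
discrimination gives a number of steps after which, starting from `ℓ`, the energy of `C` has
increased with positive probability. The energy of an iterated symmetral being continuous in the
directions (`continuous_energy_iter`), the set of directions achieving a given gain is open, so
lower semicontinuity of the iterated kernels transfers the gain to starting points near `ℓ`. By
compactness there are `N`, `δ > 0` and a neighbourhood `O` of `ℓ` such that any set of the class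
which is `ε`-far from the ball gains `δ` within `N + 1` steps with probability at least `δ`, from any
starting point in `O` (`uniform_gain`).

*Probability.* By the Markov property (`markov_set`), each time `n` at which `S_n ∈ O` while `X_n`
is `ε`-far from the ball yields with probability at least `δ` a jump of the energy by `δ` within
`N + 1` steps. A bounded monotone sequence makes boundedly many such jumps (`count_jumps`), so the
expected number of such times is finite, and almost surely there are finitely many of them
(`finite_bad_times`). By recurrence `S_n ∈ O` infinitely often, hence at some such time `X_n` is
`ε`-close to the ball.
-/

open MeasureTheory ProbabilityTheory Filter Topology RealInnerProductSpace

noncomputable section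

abbrev Euc (d : ℕ) : Type := EuclideanSpace ℝ (Fin d)

def IsSteinerSymmOf {d : ℕ} (v : Euc d) (X Y : Set (Euc d)) : Prop :=
  MeasurableSet Y ∧
  ∀ x : Euc d, ⟪x, v⟫ = 0 →
    ({t : ℝ | x + t • v ∈ Y} = Set.univ ∨
      ∃ a : ℝ, {t : ℝ | x + t • v ∈ Y} = Set.Ioo (-a) a) ∧
    volume {t : ℝ | x + t • v ∈ Y} = volume {t : ℝ | x + t • v ∈ X}

def IsSteinerOp {d : ℕ} (op : Metric.sphere (0 : Euc d) 1 → Set (Euc d) → Set (Euc d)) : Prop :=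
  ∀ (v : Metric.sphere (0 : Euc d) 1) (X : Set (Euc d)), MeasurableSet X →
    IsSteinerSymmOf (v : Euc d) X (op v X)

def IsSphericalRearrangement {d : ℕ} (star : Set (Euc d) → Set (Euc d)) : Prop :=
  ∀ A : Set (Euc d), MeasurableSet A → volume A < ⊤ →
    (∃ R : ℝ, star A = Metric.ball (0 : Euc d) R) ∧ volume (star A) = volume A

def iterOp {α S Ω : Type*} (op : S → α → α) (X : α) (Sp : ℕ → Ω → S) : ℕ → Ω → α
  | 0, ω => op (Sp 0 ω) X
  | n + 1, ω => op (Sp (n + 1) ω) (iterOp op X Sp n ω)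

/-- The iterated kernels of a transition function: `iterK κ n s` is the joint law
`P^{n+1}_s` of the next `n+1` steps of the chain started at `s`. -/
def iterK {S : Type*} [MeasurableSpace S] (κ : Kernel S S) :
    (n : ℕ) → S → Measure (Fin (n + 1) → S)
  | 0, s => (κ s).map (fun x _ => x)
  | n + 1, s => (iterK κ n s).bind fun p => (κ (p (Fin.last n))).map (Fin.snoc p)

/-- `Sp` is a time-homogeneous Markov process with transition function `κ`:
for every `n`, conditionally on `S_1, …, S_n`, the law of `S_{n+1}` is `κ (S_n)`. -/
def IsMarkovChain {Ω S : Type*} [MeasurableSpace Ω] [MeasurableSpace S]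
    (Pr : Measure Ω) (κ : Kernel S S) (Sp : ℕ → Ω → S) : Prop :=
  (∀ n, Measurable (Sp n)) ∧
  ∀ (n : ℕ) (A : Set S), MeasurableSet A →
    ∀ B : Set Ω,
      MeasurableSet[⨆ i : Fin (n + 1), MeasurableSpace.comap (Sp i) inferInstance] B →
      Pr (B ∩ Sp (n + 1) ⁻¹' A) = ∫⁻ ω in B, κ (Sp n ω) A ∂Pr

open scoped ENNReal

namespace Steiner

variable {d : ℕ}

/-! ### Sections along lines and the distance in measure -/

/-- The measure of the intersection of `A` with the line through `x` directed by `v`. -/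
def len (v : Euc d) (A : Set (Euc d)) (x : Euc d) : ℝ≥0∞ := volume {t : ℝ | x + t • v ∈ A}

theorem mem_section_iff {v : Euc d} {X Y : Set (Euc d)} (h : IsSteinerSymmOf v X Y) {x : Euc d}
    (hx : ⟪x, v⟫ = 0) (t : ℝ) : x + t • v ∈ Y ↔ ENNReal.ofReal (2 * |t|) < len v X x := by
  obtain ⟨h1, h2⟩ := h.2 x hx
  have e : (x + t • v ∈ Y) = (t ∈ {t : ℝ | x + t • v ∈ Y}) := rfl
  rw [e, len, ← h2]
  rcases h1 with h1 | ⟨a, h1⟩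
  · rw [h1, Real.volume_univ]; simp only [Set.mem_univ, ENNReal.ofReal_lt_top]
  · rw [h1, Real.volume_Ioo, ENNReal.ofReal_lt_ofReal_iff', Set.mem_Ioo, ← abs_lt]
    constructor
    · intro h; constructor <;> linarith [abs_nonneg t]
    · intro h; linarith [h.1]

theorem sphere_inner_self (v : Metric.sphere (0 : Euc d) 1) : ⟪(v : Euc d), (v : Euc d)⟫ = 1 := by
  rw [real_inner_self_eq_norm_sq]; simp

theorem inner_proj (v : Metric.sphere (0 : Euc d) 1) (y : Euc d) :
    ⟪y - ⟪y, (v : Euc d)⟫ • (v : Euc d), (v : Euc d)⟫ = 0 := by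
  rw [inner_sub_left, inner_smul_left, sphere_inner_self]; simp

variable {op : Metric.sphere (0 : Euc d) 1 → Set (Euc d) → Set (Euc d)}

theorem mem_op_iff (hop : IsSteinerOp op) (v : Metric.sphere (0 : Euc d) 1) {A : Set (Euc d)}
    (hA : MeasurableSet A) (y : Euc d) :
    y ∈ op v A ↔ ENNReal.ofReal (2 * |⟪y, (v : Euc d)⟫|) <
      len v A (y - ⟪y, (v : Euc d)⟫ • (v : Euc d)) := by
  rw [← mem_section_iff (hop v A hA) (inner_proj v y)]
  simp

theorem measurableSet_op (hop : IsSteinerOp op) (v : Metric.sphere (0 : Euc d) 1)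
    {A : Set (Euc d)} (hA : MeasurableSet A) : MeasurableSet (op v A) := (hop v A hA).1

theorem op_mono (hop : IsSteinerOp op) (v : Metric.sphere (0 : Euc d) 1) {A B : Set (Euc d)}
    (hA : MeasurableSet A) (hB : MeasurableSet B) (h : A ⊆ B) : op v A ⊆ op v B := by
  intro y hy
  rw [mem_op_iff hop v hA] at hy
  rw [mem_op_iff hop v hB]
  exact hy.trans_le (measure_mono fun t ht => h ht)

/-- Fubini decomposition of Lebesgue measure along the lines directed by `v`. The transverse
measure is a multiple of the Haar measure of `v^⊥`; its normalisation is irrelevant. -/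
theorem exists_fubini (v : Metric.sphere (0 : Euc d) 1) :
    ∃ ν : Measure (ℝ ∙ (v : Euc d))ᗮ, ∀ f : Euc d → ℝ≥0∞, Measurable f →
      ∫⁻ y, f y = ∫⁻ x, (∫⁻ t : ℝ, f ((x : Euc d) + t • (v : Euc d))) ∂ν := by
  let W := (ℝ ∙ (v : Euc d))ᗮ
  let L : (W × ℝ) →L[ℝ] Euc d :=
    W.subtypeL.comp (ContinuousLinearMap.fst ℝ W ℝ) +
      (ContinuousLinearMap.snd ℝ W ℝ).smulRight (v : Euc d)
  have hL : ∀ p : W × ℝ, L p = (p.1 : Euc d) + p.2 • (v : Euc d) := fun p => rfl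
  have hin : ∀ w : W, ⟪(w : Euc d), (v : Euc d)⟫ = 0 := fun w =>
    (Submodule.mem_orthogonal_singleton_iff_inner_left).1 w.2
  have hbij : Function.Bijective L := by
    constructor
    · rw [injective_iff_map_eq_zero]
      intro p hp
      rw [hL] at hp
      have h2 : p.2 = 0 := by
        have := congrArg (fun z => ⟪z, (v : Euc d)⟫) hp
        simpa [inner_add_left, inner_smul_left, hin, sphere_inner_self] using this
      rw [h2] at hp
      ext1
      · simpa using hp
      · exact h2
    · intro y
      refine ⟨(⟨y - ⟪y, (v : Euc d)⟫ • (v : Euc d), ?_⟩, ⟪y, (v : Euc d)⟫), ?_⟩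
      · exact (Submodule.mem_orthogonal_singleton_iff_inner_left).2 (inner_proj v y)
      · rw [hL]; simp
  let e : (W × ℝ) ≃L[ℝ] Euc d :=
    (LinearEquiv.ofBijective L.toLinearMap hbij).toContinuousLinearEquiv
  have he : ∀ p, e p = (p.1 : Euc d) + p.2 • (v : Euc d) := fun p => rfl
  let μ₀ : Measure (W × ℝ) := (volume : Measure W).prod volume
  have : (μ₀.map e).IsAddHaarMeasure := e.isAddHaarMeasure_map μ₀
  let c : NNReal := (volume : Measure (Euc d)).addHaarScalarFactor (μ₀.map e)
  have hc : (volume : Measure (Euc d)) = c • μ₀.map e := Measure.isAddLeftInvariant_eq_smul _ _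
  refine ⟨c • volume, fun f hf => ?_⟩
  have hm : Measurable e := e.continuous.measurable
  rw [hc, lintegral_smul_measure, lintegral_smul_measure, lintegral_map hf hm]
  congr 1
  exact lintegral_prod (fun p => f (e p)) (hf.comp hm).aemeasurable

theorem exists_fubini_measure (v : Metric.sphere (0 : Euc d) 1) :
    ∃ ν : Measure (ℝ ∙ (v : Euc d))ᗮ, (∀ f : Euc d → ℝ≥0∞, Measurable f →
      ∫⁻ y, f y = ∫⁻ x, (∫⁻ t : ℝ, f ((x : Euc d) + t • (v : Euc d))) ∂ν) ∧
      ∀ A : Set (Euc d), MeasurableSet A → volume A = ∫⁻ x, len v A x ∂ν := by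
  obtain ⟨ν, hν⟩ := exists_fubini v
  refine ⟨ν, hν, fun A hA => ?_⟩
  have := hν (A.indicator 1) (measurable_one.indicator hA)
  rw [lintegral_indicator_one hA] at this
  rw [this]
  refine lintegral_congr fun x => ?_
  have hs : MeasurableSet {t : ℝ | (x : Euc d) + t • (v : Euc d) ∈ A} :=
    (by fun_prop : Measurable fun t : ℝ => (x : Euc d) + t • (v : Euc d)) hA
  rw [len, ← lintegral_indicator_one hs]
  rfl

theorem inner_mem (v : Metric.sphere (0 : Euc d) 1) (x : (ℝ ∙ (v : Euc d))ᗮ) :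
    ⟪(x : Euc d), (v : Euc d)⟫ = 0 :=
  (Submodule.mem_orthogonal_singleton_iff_inner_left).1 x.2

theorem len_op (hop : IsSteinerOp op) (v : Metric.sphere (0 : Euc d) 1) {A : Set (Euc d)}
    (hA : MeasurableSet A) (x : (ℝ ∙ (v : Euc d))ᗮ) :
    len v (op v A) x = len v A x :=
  ((hop v A hA).2 x (inner_mem v x)).2

theorem volume_op (hop : IsSteinerOp op) (v : Metric.sphere (0 : Euc d) 1) {A : Set (Euc d)}
    (hA : MeasurableSet A) : volume (op v A) = volume A := by
  obtain ⟨ν, -, hν⟩ := exists_fubini_measure v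
  rw [hν _ hA, hν _ (measurableSet_op hop v hA)]
  exact lintegral_congr fun x => len_op hop v hA x

theorem volume_op_diff_le (hop : IsSteinerOp op) (v : Metric.sphere (0 : Euc d) 1)
    {A B : Set (Euc d)} (hA : MeasurableSet A) (hB : MeasurableSet B) (hB' : volume B ≠ ⊤) :
    volume (op v A \ op v B) ≤ volume (A \ B) := by
  have hu := hA.union hB
  calc volume (op v A \ op v B) ≤ volume (op v (A ∪ B) \ op v B) :=
        measure_mono (Set.sdiff_subset_sdiff_left (op_mono hop v hA hu Set.subset_union_left))
    _ = volume (A ∪ B) - volume B := by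
        rw [measure_sdiff (op_mono hop v hB hu Set.subset_union_right)
          (measurableSet_op hop v hB).nullMeasurableSet (by rwa [volume_op hop v hB]),
          volume_op hop v hB, volume_op hop v hu]
    _ = volume (A \ B) := by
        rw [← measure_sdiff Set.subset_union_right hB.nullMeasurableSet hB',
          Set.union_sdiff_right]

theorem volume_symmDiff {A B : Set (Euc d)} (hA : MeasurableSet A) (hB : MeasurableSet B) :
    volume (symmDiff A B) = volume (A \ B) + volume (B \ A) :=
  measure_symmDiff_eq hA.nullMeasurableSet hB.nullMeasurableSet

/-- Steiner symmetrization does not increase the distance in measure: it preserves inclusions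
and volumes. -/
theorem volume_symmDiff_op_le (hop : IsSteinerOp op) (v : Metric.sphere (0 : Euc d) 1)
    {A B : Set (Euc d)} (hA : MeasurableSet A) (hB : MeasurableSet B) (hA' : volume A ≠ ⊤)
    (hB' : volume B ≠ ⊤) :
    volume (symmDiff (op v A) (op v B)) ≤ volume (symmDiff A B) := by
  rw [volume_symmDiff hA hB,
    volume_symmDiff (measurableSet_op hop v hA) (measurableSet_op hop v hB)]
  exact add_le_add (volume_op_diff_le hop v hA hB hB') (volume_op_diff_le hop v hB hA hA')

/-! ### Symmetrization, balls and thickenings -/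

theorem norm_sq_line (v : Metric.sphere (0 : Euc d) 1) {x : Euc d}
    (hx : ⟪x, (v : Euc d)⟫ = 0) (t : ℝ) : ‖x + t • (v : Euc d)‖ ^ 2 = ‖x‖ ^ 2 + t ^ 2 := by
  rw [norm_add_sq_real, inner_smul_right, hx, norm_smul]
  simp

theorem op_subset_ball (hop : IsSteinerOp op) (v : Metric.sphere (0 : Euc d) 1)
    {A : Set (Euc d)} (hA : MeasurableSet A) {R : ℝ} (h : A ⊆ Metric.ball 0 R) :
    op v A ⊆ Metric.ball 0 R := by
  intro y hy
  rw [mem_op_iff hop v hA] at hy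
  set t := ⟪y, (v : Euc d)⟫ with ht
  set x := y - t • (v : Euc d) with hxd
  have hx : ⟪x, (v : Euc d)⟫ = 0 := inner_proj v y
  have hyx : y = x + t • (v : Euc d) := by simp [hxd]
  have hlt := hy
  have hsub : {s : ℝ | x + s • (v : Euc d) ∈ A} ⊆
      Set.Icc (-√(R ^ 2 - ‖x‖ ^ 2)) (√(R ^ 2 - ‖x‖ ^ 2)) := by
    intro s hs
    have h1 : ‖x + s • (v : Euc d)‖ < R := by simpa using h hs
    have h2 := norm_sq_line v hx s
    rw [Set.mem_Icc, ← abs_le]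
    apply Real.abs_le_sqrt
    nlinarith [norm_nonneg (x + s • (v : Euc d))]
  have hne : {s : ℝ | x + s • (v : Euc d) ∈ A}.Nonempty := by
    rw [Set.nonempty_iff_ne_empty]
    intro h0
    rw [len, h0] at hy
    simp at hy
  obtain ⟨s, hs⟩ := hne
  have hR : 0 < R := lt_of_le_of_lt (norm_nonneg _) (by simpa using h hs)
  have := hy.trans_le (measure_mono hsub)
  rw [Real.volume_Icc, ENNReal.ofReal_lt_ofReal_iff'] at this
  have h3 : |t| < √(R ^ 2 - ‖x‖ ^ 2) := by linarith [this.1]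
  have h4 : t ^ 2 < R ^ 2 - ‖x‖ ^ 2 := by
    have := Real.lt_sqrt (abs_nonneg t) |>.1 h3
    rwa [sq_abs] at this
  rw [mem_ball_zero_iff, hyx]
  apply lt_of_pow_lt_pow_left₀ 2 hR.le
  rw [norm_sq_line v hx]
  linarith

/-- One-dimensional Brunn–Minkowski inequality against an interval. -/
theorem volume_thickening_ge {E : Set ℝ} (hne : E.Nonempty) (hb : Bornology.IsBounded E) {ρ : ℝ}
    (hρ : 0 < ρ) : volume E + ENNReal.ofReal (2 * ρ) ≤ volume (Metric.thickening ρ E) := by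
  have hba := hb.bddAbove
  have hbb := hb.bddBelow
  have h1 : E ∪ (Set.Ioo (sSup E) (sSup E + ρ) ∪ Set.Ioo (sInf E - ρ) (sInf E)) ⊆
      Metric.thickening ρ E := by
    rintro x (hx | hx | hx)
    · exact Metric.self_subset_thickening hρ E hx
    · obtain ⟨y, hy, hxy⟩ := exists_lt_of_lt_csSup hne (show x - ρ < sSup E by linarith [hx.2])
      refine Metric.mem_thickening_iff.2 ⟨y, hy, ?_⟩
      have := le_csSup hba hy
      rw [Real.dist_eq, abs_lt]
      constructor <;> linarith [hx.1]
    · obtain ⟨y, hy, hxy⟩ := exists_lt_of_csInf_lt hne (show sInf E < x + ρ by linarith [hx.1])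
      refine Metric.mem_thickening_iff.2 ⟨y, hy, ?_⟩
      have := csInf_le hbb hy
      rw [Real.dist_eq, abs_lt]
      constructor <;> linarith [hx.2]
  refine le_trans ?_ (measure_mono h1)
  have hle : sInf E ≤ sSup E := csInf_le_csSup hne hbb hba
  rw [measure_union _ (measurableSet_Ioo.union measurableSet_Ioo), measure_union _ measurableSet_Ioo,
    Real.volume_Ioo, Real.volume_Ioo, ← ENNReal.ofReal_add (by linarith) (by linarith)]
  · apply le_of_eq; congr 2; ring
  · rw [Set.disjoint_left]
    intro x hx hx'
    linarith [hx.1, hx'.2]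
  · rw [Set.disjoint_left]
    rintro x hx (hx' | hx')
    · linarith [hx'.1, le_csSup hba hx]
    · linarith [hx'.2, csInf_le hbb hx]

/-- Thickening commutes with symmetrization up to an inclusion: this is the Brunn–Minkowski
inequality on each line. -/
theorem thickening_op_subset (hop : IsSteinerOp op) (v : Metric.sphere (0 : Euc d) 1)
    {A : Set (Euc d)} (hA : MeasurableSet A) {R : ℝ} (hAR : A ⊆ Metric.ball 0 R) (r : ℝ) :
    Metric.thickening r (op v A) ⊆ op v (Metric.thickening r A) := by
  intro z hz
  obtain ⟨y, hy, hzy⟩ := Metric.mem_thickening_iff.1 hz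
  have hr : 0 < r := dist_nonneg.trans_lt hzy
  rw [mem_op_iff hop v Metric.isOpen_thickening.measurableSet]
  rw [mem_op_iff hop v hA] at hy
  set t := ⟪y, (v : Euc d)⟫ with ht
  set x := y - t • (v : Euc d) with hxd
  set t' := ⟪z, (v : Euc d)⟫ with ht'
  set x' := z - t' • (v : Euc d) with hxd'
  have hx : ⟪x, (v : Euc d)⟫ = 0 := inner_proj v y
  have hx' : ⟪x', (v : Euc d)⟫ = 0 := inner_proj v z
  have hxx : ⟪x' - x, (v : Euc d)⟫ = 0 := by rw [inner_sub_left, hx, hx', sub_zero]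
  have key : ∀ s s' : ℝ, dist (x' + s' • (v : Euc d)) (x + s • (v : Euc d)) ^ 2
      = ‖x' - x‖ ^ 2 + (s' - s) ^ 2 := by
    intro s s'
    rw [dist_eq_norm, ← norm_sq_line v hxx]
    congr 2
    rw [sub_smul]; abel
  have hzy2 : ‖x' - x‖ ^ 2 + (t' - t) ^ 2 < r ^ 2 := by
    rw [← key]
    have e1 : x' + t' • (v : Euc d) = z := by simp [hxd']
    have e2 : x + t • (v : Euc d) = y := by simp [hxd]
    rw [e1, e2]
    exact pow_lt_pow_left₀ hzy dist_nonneg two_ne_zero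
  set ρ := √(r ^ 2 - ‖x' - x‖ ^ 2) with hρd
  have hpos : 0 ≤ r ^ 2 - ‖x' - x‖ ^ 2 := by nlinarith [sq_nonneg (t' - t)]
  have htρ : |t' - t| < ρ := by
    rw [hρd, Real.lt_sqrt (abs_nonneg _), sq_abs]; linarith
  have hρ : 0 < ρ := (abs_nonneg _).trans_lt htρ
  have hsub : Metric.thickening ρ {s : ℝ | x + s • (v : Euc d) ∈ A} ⊆
      {s : ℝ | x' + s • (v : Euc d) ∈ Metric.thickening r A} := by
    intro s' hs'
    obtain ⟨s, hs, hd⟩ := Metric.mem_thickening_iff.1 hs'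
    refine Metric.mem_thickening_iff.2 ⟨x + s • (v : Euc d), hs, ?_⟩
    apply lt_of_pow_lt_pow_left₀ 2 hr.le
    rw [key]
    rw [Real.dist_eq] at hd
    have := (Real.lt_sqrt (abs_nonneg _)).1 hd
    rw [sq_abs] at this
    linarith
  have hne : {s : ℝ | x + s • (v : Euc d) ∈ A}.Nonempty := by
    rw [Set.nonempty_iff_ne_empty]
    intro h0
    rw [len, h0] at hy
    simp at hy
  have hb : Bornology.IsBounded {s : ℝ | x + s • (v : Euc d) ∈ A} := by
    refine (Metric.isBounded_Icc (-R) R).subset fun s hs => ?_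
    have h1 : ‖x + s • (v : Euc d)‖ < R := by simpa using hAR hs
    have h2 := norm_sq_line v hx s
    rw [Set.mem_Icc, ← abs_le]
    apply abs_le_of_sq_le_sq _ ((norm_nonneg _).trans h1.le)
    nlinarith [norm_nonneg (x + s • (v : Euc d))]
  refine lt_of_lt_of_le ?_ ((volume_thickening_ge hne hb hρ).trans (measure_mono hsub))
  calc ENNReal.ofReal (2 * |t'|) ≤ ENNReal.ofReal (2 * |t|) + ENNReal.ofReal (2 * |t' - t|) := by
        rw [← ENNReal.ofReal_add (by positivity) (by positivity)]
        apply ENNReal.ofReal_le_ofReal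
        have := abs_add_le t (t' - t)
        rw [add_sub_cancel] at this
        linarith
    _ < _ := by
        apply ENNReal.add_lt_add hy
        rw [ENNReal.ofReal_lt_ofReal_iff (by positivity)]
        linarith

/-! ### The energy -/

/-- A bounded weight, strictly decreasing in the distance to the origin. -/
def gauss (x : Euc d) : ℝ≥0∞ := ENNReal.ofReal (Real.exp (-‖x‖ ^ 2))

/-- The measure of density `exp (-‖x‖²)`, used as an energy which symmetrization increases. -/
def energy (d : ℕ) : Measure (Euc d) := volume.withDensity gauss

theorem measurable_gauss : Measurable (gauss : Euc d → ℝ≥0∞) := by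
  unfold gauss; fun_prop

theorem energy_le (A : Set (Euc d)) : energy d A ≤ volume A := by
  have h : energy d ≤ volume := by
    have : energy d ≤ volume.withDensity (1 : Euc d → ℝ≥0∞) := by
      refine withDensity_mono (Eventually.of_forall fun x => ?_)
      simp only [gauss, Pi.one_apply, ENNReal.ofReal_le_one, Real.exp_le_one_iff]
      simp
    rwa [withDensity_one] at this
  exact h A

theorem energy_le_add (A B : Set (Euc d)) :
    energy d A ≤ energy d B + volume (symmDiff A B) := by
  calc energy d A ≤ energy d (B ∪ A \ B) := measure_mono (by simp)
    _ ≤ energy d B + energy d (A \ B) := measure_union_le _ _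
    _ ≤ _ := add_le_add le_rfl ((energy_le _).trans (measure_mono Set.subset_union_left))

/-- The bathtub principle on the line. -/
theorem bathtub {w : ℝ → ℝ≥0∞} (hw : Measurable w) {E F : Set ℝ} (hE : MeasurableSet E)
    (hF : MeasurableSet F) (hEF : volume F = volume E) (hfin : volume E ≠ ⊤) {c : ℝ≥0∞}
    (hc : c ≠ ⊤) (hin : ∀ t ∈ F, c < w t) (hout : ∀ t ∉ F, w t ≤ c) :
    ∫⁻ t in E, w t ≤ ∫⁻ t in F, w t ∧
      (∫⁻ t in E, w t = ∫⁻ t in F, w t → ∫⁻ t in E, w t ≠ ⊤ → volume (symmDiff E F) = 0) := by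
  have hdiff : volume (E \ F) = volume (F \ E) := by
    have h1 := measure_inter_add_sdiff (μ := volume) E hF
    have h2 := measure_inter_add_sdiff (μ := volume) F hE
    rw [Set.inter_comm] at h2
    have h3 : volume (E ∩ F) ≠ ⊤ := measure_ne_top_of_subset Set.inter_subset_left hfin
    rw [hEF, ← h1] at h2
    exact ((ENNReal.add_right_inj h3).1 h2).symm
  have e1 : ∫⁻ t in E, w t = (∫⁻ t in E ∩ F, w t) + ∫⁻ t in E \ F, w t :=
    (lintegral_inter_add_sdiff w E hF).symm
  have e2 : ∫⁻ t in F, w t = (∫⁻ t in E ∩ F, w t) + ∫⁻ t in F \ E, w t := by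
    rw [Set.inter_comm]; exact (lintegral_inter_add_sdiff w F hE).symm
  have l1 : ∫⁻ t in E \ F, w t ≤ c * volume (F \ E) := by
    rw [← hdiff, ← setLIntegral_const]
    exact setLIntegral_mono measurable_const fun t ht => hout t ht.2
  have l2 : c * volume (F \ E) ≤ ∫⁻ t in F \ E, w t := by
    rw [← setLIntegral_const]
    exact setLIntegral_mono hw fun t ht => (hin t ht.1).le
  refine ⟨by rw [e1, e2]; exact add_le_add le_rfl (l1.trans l2), fun heq hft => ?_⟩
  by_contra hne
  have hpos : volume (F \ E) ≠ 0 := by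
    intro h0
    apply hne
    rw [measure_symmDiff_eq hE.nullMeasurableSet hF.nullMeasurableSet, hdiff, h0, add_zero]
  have hfd : volume (F \ E) ≠ ⊤ := measure_ne_top_of_subset Set.sdiff_subset (by rwa [hEF])
  have hst : ∫⁻ t in F \ E, c < ∫⁻ t in F \ E, w t := by
    refine setLIntegral_strict_mono (hF.diff hE) hpos hw ?_
      (Eventually.of_forall fun t ht => hin t ht.1)
    rw [setLIntegral_const]
    exact ENNReal.mul_ne_top hc hfd
  rw [setLIntegral_const] at hst
  have hf2 : ∫⁻ t in E ∩ F, w t ≠ ⊤ :=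
    ne_top_of_le_ne_top hft (e1 ▸ le_self_add)
  rw [e1, e2, ENNReal.add_right_inj hf2] at heq
  exact absurd (heq ▸ l1) (not_le.2 hst)

theorem measurableSet_section (v : Euc d) {A : Set (Euc d)} (hA : MeasurableSet A) (x : Euc d) :
    MeasurableSet {t : ℝ | x + t • v ∈ A} :=
  (by fun_prop : Measurable fun t : ℝ => x + t • v) hA

theorem len_eq_lintegral (v : Euc d) {A : Set (Euc d)} (hA : MeasurableSet A) (x : Euc d) :
    len v A x = ∫⁻ t : ℝ, A.indicator 1 (x + t • v) := by
  rw [len, ← lintegral_indicator_one (measurableSet_section v hA x)]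
  rfl

theorem measurable_len (v : Metric.sphere (0 : Euc d) 1) {A : Set (Euc d)}
    (hA : MeasurableSet A) :
    Measurable fun x : (ℝ ∙ (v : Euc d))ᗮ => len (v : Euc d) A x := by
  simp_rw [len_eq_lintegral (v : Euc d) hA]
  refine Measurable.lintegral_prod_right'
    (f := fun p : (ℝ ∙ (v : Euc d))ᗮ × ℝ => A.indicator 1 ((p.1 : Euc d) + p.2 • (v : Euc d))) ?_
  exact (measurable_one.indicator hA).comp (by fun_prop)

/-- Symmetrization increases the energy, strictly unless the set is already symmetric. -/
theorem energy_op (hop : IsSteinerOp op) (v : Metric.sphere (0 : Euc d) 1)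
    {A : Set (Euc d)} (hA : MeasurableSet A) (hfin : volume A ≠ ⊤) :
    energy d A ≤ energy d (op v A) ∧
      (energy d (op v A) ≤ energy d A → volume (symmDiff A (op v A)) = 0) := by
  obtain ⟨ν, hν, hνm⟩ := exists_fubini_measure v
  have hB := measurableSet_op hop v hA
  have hE : ∀ C : Set (Euc d), MeasurableSet C → energy d C = ∫⁻ x,
      (∫⁻ t in {t : ℝ | (x : Euc d) + t • (v : Euc d) ∈ C},
        gauss ((x : Euc d) + t • (v : Euc d))) ∂ν := by
    intro C hC
    rw [energy, withDensity_apply _ hC, ← lintegral_indicator hC,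
      hν _ (measurable_gauss.indicator hC)]
    refine lintegral_congr fun x => ?_
    rw [← lintegral_indicator (measurableSet_section (v : Euc d) hC x)]
    rfl
  have hlenfin : ∀ᵐ x : (ℝ ∙ (v : Euc d))ᗮ ∂ν, len (v : Euc d) A x < ⊤ := by
    refine ae_lt_top (measurable_len v hA) ?_
    rw [← hνm A hA]; exact hfin
  have hbt : ∀ᵐ x : (ℝ ∙ (v : Euc d))ᗮ ∂ν, (∫⁻ t in {t : ℝ | (x : Euc d) + t • (v : Euc d) ∈ A},
        gauss ((x : Euc d) + t • (v : Euc d))) ≤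
        (∫⁻ t in {t : ℝ | (x : Euc d) + t • (v : Euc d) ∈ op v A},
        gauss ((x : Euc d) + t • (v : Euc d))) ∧
      ((∫⁻ t in {t : ℝ | (x : Euc d) + t • (v : Euc d) ∈ A},
        gauss ((x : Euc d) + t • (v : Euc d))) =
        (∫⁻ t in {t : ℝ | (x : Euc d) + t • (v : Euc d) ∈ op v A},
        gauss ((x : Euc d) + t • (v : Euc d))) →
        (∫⁻ t in {t : ℝ | (x : Euc d) + t • (v : Euc d) ∈ A},
        gauss ((x : Euc d) + t • (v : Euc d))) ≠ ⊤ →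
        len (v : Euc d) (symmDiff A (op v A)) x = 0) := by
    filter_upwards [hlenfin] with x hx
    have hgx : ∀ t : ℝ, gauss ((x : Euc d) + t • (v : Euc d)) =
        ENNReal.ofReal (Real.exp (-(‖(x : Euc d)‖ ^ 2 + t ^ 2))) := by
      intro t
      rw [gauss, norm_sq_line v (inner_mem v x)]
    have hm : ∀ t : ℝ, t ∈ {t : ℝ | (x : Euc d) + t • (v : Euc d) ∈ op v A} ↔
        2 * |t| < (len (v : Euc d) A x).toReal := by
      intro t
      have := mem_section_iff (hop v A hA) (inner_mem v x) t
      rw [ENNReal.ofReal_lt_iff_lt_toReal (by positivity) hx.ne] at this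
      exact this
    refine bathtub (c := ENNReal.ofReal (Real.exp (-(‖(x : Euc d)‖ ^ 2 +
        ((len (v : Euc d) A x).toReal / 2) ^ 2)))) (measurable_gauss.comp (by fun_prop))
      (measurableSet_section (v : Euc d) hA x) (measurableSet_section (v : Euc d) hB x)
      (len_op hop v hA x) hx.ne ENNReal.ofReal_ne_top ?_ ?_
    · intro t ht
      rw [hm] at ht
      rw [Function.comp_apply, hgx, ENNReal.ofReal_lt_ofReal_iff (Real.exp_pos _), Real.exp_lt_exp]
      have : |t| ^ 2 < ((len (v : Euc d) A x).toReal / 2) ^ 2 :=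
        pow_lt_pow_left₀ (by linarith) (abs_nonneg _) two_ne_zero
      rw [sq_abs] at this
      linarith
    · intro t ht
      rw [hm, not_lt] at ht
      rw [Function.comp_apply, hgx]
      apply ENNReal.ofReal_le_ofReal
      rw [Real.exp_le_exp]
      have : ((len (v : Euc d) A x).toReal / 2) ^ 2 ≤ |t| ^ 2 :=
        pow_le_pow_left₀ (by positivity) (by linarith) 2
      rw [sq_abs] at this
      linarith
  have hmeas : ∀ C : Set (Euc d), MeasurableSet C → Measurable fun x : (ℝ ∙ (v : Euc d))ᗮ =>
      (∫⁻ t in {t : ℝ | (x : Euc d) + t • (v : Euc d) ∈ C},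
        gauss ((x : Euc d) + t • (v : Euc d))) := by
    intro C hC
    have : ∀ x : (ℝ ∙ (v : Euc d))ᗮ, (∫⁻ t in {t : ℝ | (x : Euc d) + t • (v : Euc d) ∈ C},
        gauss ((x : Euc d) + t • (v : Euc d))) =
        ∫⁻ t : ℝ, C.indicator gauss ((x : Euc d) + t • (v : Euc d)) := by
      intro x
      rw [← lintegral_indicator (measurableSet_section (v : Euc d) hC x)]
      rfl
    simp_rw [this]
    refine Measurable.lintegral_prod_right' (f := fun p : (ℝ ∙ (v : Euc d))ᗮ × ℝ =>
      C.indicator gauss ((p.1 : Euc d) + p.2 • (v : Euc d))) ?_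
    exact (measurable_gauss.indicator hC).comp (by fun_prop)
  have hle : energy d A ≤ energy d (op v A) := by
    rw [hE A hA, hE _ hB]
    exact lintegral_mono_ae (hbt.mono fun x hx => hx.1)
  refine ⟨hle, fun hge => ?_⟩
  have hEfin : energy d A ≠ ⊤ := ne_top_of_le_ne_top hfin (energy_le A)
  rw [hE A hA] at hEfin
  rw [hE A hA, hE _ hB] at hge
  have hae := ae_eq_of_ae_le_of_lintegral_le (hbt.mono fun x hx => hx.1) hEfin
    (hmeas _ hB).aemeasurable hge
  have hfinae := ae_lt_top (hmeas A hA) hEfin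
  have hsd : MeasurableSet (symmDiff A (op v A)) := hA.symmDiff hB
  rw [hνm _ hsd, lintegral_eq_zero_iff (measurable_len v hsd)]
  filter_upwards [hbt, hae, hfinae] with x h1 h2 h3
  exact h1.2 h2 h3.ne

/-! ### Continuity in the direction -/

/-- The formula for `op` is equivariant under an isometric involution sending `v` to `-u`. -/
theorem op_eq_preimage (hop : IsSteinerOp op) {u v : Metric.sphere (0 : Euc d) 1}
    (f : Euc d ≃ₗᵢ[ℝ] Euc d) (hf : ∀ x, f (f x) = x) (hfv : f v = -(u : Euc d))
    {A : Set (Euc d)} (hA : MeasurableSet A) : op u A = f ⁻¹' (op v (f ⁻¹' A)) := by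
  ext y
  have hfA : MeasurableSet (f ⁻¹' A) := f.continuous.measurable hA
  rw [Set.mem_preimage, mem_op_iff hop u hA, mem_op_iff hop v hfA]
  have hin : ⟪f y, (v : Euc d)⟫ = -⟪y, (u : Euc d)⟫ := by
    rw [← f.inner_map_map, hf, hfv, inner_neg_right]
  rw [hin, abs_neg]
  have : len (v : Euc d) (f ⁻¹' A) (f y - -⟪y, (u : Euc d)⟫ • (v : Euc d)) =
      len u A (y - ⟪y, (u : Euc d)⟫ • (u : Euc d)) := by
    have hs : {t : ℝ | f y - -⟪y, (u : Euc d)⟫ • (v : Euc d) + t • (v : Euc d) ∈ f ⁻¹' A} =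
        Neg.neg ⁻¹' {t : ℝ | y - ⟪y, (u : Euc d)⟫ • (u : Euc d) + t • (u : Euc d) ∈ A} := by
      ext t
      simp only [Set.mem_ofPred_eq, Set.mem_preimage, map_add, map_sub, map_smul, hf, hfv, neg_smul,
        smul_neg, map_neg]
      simp
    rw [len, hs]
    exact (Measure.measurePreserving_neg (volume : Measure ℝ)).measure_preimage
      (measurableSet_section _ hA _).nullMeasurableSet
  rw [this]

/-- The reflection in the hyperplane orthogonal to `v + u`, which exchanges `v` and `-u`; it is the
identity when `u = -v`. -/
def refl (v u : Metric.sphere (0 : Euc d) 1) : Euc d ≃ₗᵢ[ℝ] Euc d :=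
  (ℝ ∙ ((v : Euc d) + (u : Euc d)))ᗮ.reflection

theorem refl_refl (v u : Metric.sphere (0 : Euc d) 1) (x : Euc d) :
    refl v u (refl v u x) = x := Submodule.reflection_reflection _ x

theorem refl_apply_left (v u : Metric.sphere (0 : Euc d) 1) : refl v u v = -(u : Euc d) := by
  have := Submodule.reflection_sub (v := (v : Euc d)) (w := -(u : Euc d)) (by simp)
  rwa [sub_neg_eq_add] at this

theorem refl_apply (v u : Metric.sphere (0 : Euc d) 1) (x : Euc d) :
    refl v u x = x - (2 : ℕ) • (⟪(v : Euc d) + u, x⟫ / ‖(v : Euc d) + u‖ ^ 2) •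
      ((v : Euc d) + u) := by
  rw [refl, Submodule.reflection_orthogonal_apply, Submodule.reflection_singleton_apply, neg_sub]
  rfl

/-- The reflections as elements of the space of continuous maps. -/
def reflC (v u : Metric.sphere (0 : Euc d) 1) : C(Euc d, Euc d) :=
  ⟨refl v u, (refl v u).continuous⟩

theorem tendsto_reflC (v : Metric.sphere (0 : Euc d) 1) :
    Tendsto (reflC v) (𝓝 v) (𝓝 (reflC v v)) := by
  rw [ContinuousMap.tendsto_iff_tendstoLocallyUniformly,
    tendstoLocallyUniformly_iff_forall_tendsto]
  intro x
  have hv : ‖(v : Euc d) + v‖ ^ 2 ≠ 0 := by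
    rw [← two_smul ℝ, norm_smul]; simp
  have hc : ContinuousAt (fun p : Metric.sphere (0 : Euc d) 1 × Euc d => refl v p.1 p.2)
      (v, x) := by
    simp_rw [refl_apply]
    have hv' : ‖(v : Euc d) + ((v, x) : Metric.sphere (0 : Euc d) 1 × Euc d).1‖ ^ 2 ≠ 0 := hv
    fun_prop (disch := exact hv')
  have h1 : Tendsto (fun p : Metric.sphere (0 : Euc d) 1 × Euc d => refl v v p.2)
      (𝓝 (v, x)) (𝓝 (refl v v x)) :=
    ((refl v v).continuous.comp continuous_snd).continuousAt
  rw [← nhds_prod_eq]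
  have := Tendsto.prodMk_nhds h1 hc.tendsto
  exact this.mono_right (nhds_le_uniformity _)

theorem tendsto_preimage_refl (v : Metric.sphere (0 : Euc d) 1) {A : Set (Euc d)}
    (hA : MeasurableSet A) (hfin : volume A ≠ ⊤) :
    Tendsto (fun u => volume (symmDiff (refl v u ⁻¹' A) (refl v v ⁻¹' A))) (𝓝 v) (𝓝 0) := by
  have hp : ∀ u, MeasurePreserving (reflC v u) (volume : Measure (Euc d)) volume := fun u =>
    (refl v u).measurePreserving
  have h := tendsto_measure_symmDiff_preimage_nhds_zero (tendsto_reflC v)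
    (Eventually.of_forall hp) (hp v) hA.nullMeasurableSet hfin
  exact h

/-- `op u A` depends continuously on `u`. Writing `op u A = ρ (op v (ρ A))` for the reflection `ρ`
exchanging `v` and `-u`, this follows from the continuity of the action of isometries on sets of
finite measure. -/
theorem tendsto_op (hop : IsSteinerOp op) (v : Metric.sphere (0 : Euc d) 1) {A : Set (Euc d)}
    (hA : MeasurableSet A) (hfin : volume A ≠ ⊤) :
    Tendsto (fun u => volume (symmDiff (op u A) (op v A))) (𝓝 v) (𝓝 0) := by
  have hmA : ∀ u, MeasurableSet (refl v u ⁻¹' A) := fun u => (refl v u).continuous.measurable hA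
  have hvA : ∀ u, volume (refl v u ⁻¹' A) = volume A := fun u =>
    (refl v u).measurePreserving.measure_preimage hA.nullMeasurableSet
  set C := op v (refl v v ⁻¹' A) with hC
  have hCm : MeasurableSet C := measurableSet_op hop v (hmA v)
  have hCfin : volume C ≠ ⊤ := by rw [hC, volume_op hop v (hmA v), hvA]; exact hfin
  have h := (tendsto_preimage_refl v hA hfin).add (tendsto_preimage_refl v hCm hCfin)
  rw [add_zero] at h
  refine tendsto_of_tendsto_of_tendsto_of_le_of_le tendsto_const_nhds h (fun _ => zero_le) ?_
  intro u
  have e : ∀ u, op u A = refl v u ⁻¹' (op v (refl v u ⁻¹' A)) := fun u =>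
    op_eq_preimage hop (refl v u) (refl_refl v u) (refl_apply_left v u) hA
  have hmu := measurableSet_op hop v (hmA u)
  calc volume (symmDiff (op u A) (op v A))
      = volume (symmDiff (refl v u ⁻¹' (op v (refl v u ⁻¹' A))) (refl v v ⁻¹' C)) := by
        rw [e u]; congr 2; exact e v
    _ ≤ volume (symmDiff (refl v u ⁻¹' (op v (refl v u ⁻¹' A))) (refl v u ⁻¹' C)) +
        volume (symmDiff (refl v u ⁻¹' C) (refl v v ⁻¹' C)) := measure_symmDiff_le _ _ _
    _ ≤ _ := by
        refine add_le_add ?_ le_rfl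
        rw [← Set.preimage_symmDiff, (refl v u).measurePreserving.measure_preimage
          (hmu.symmDiff hCm).nullMeasurableSet]
        refine volume_symmDiff_op_le hop v (hmA u) (hmA v) ?_ ?_ <;> rwa [hvA]

/-! ### Iterated symmetrals -/

/-- The set obtained from `A` by the successive symmetrizations `q 0, …, q n`. -/
def iter (op : Metric.sphere (0 : Euc d) 1 → Set (Euc d) → Set (Euc d)) (A : Set (Euc d))
    (q : ℕ → Metric.sphere (0 : Euc d) 1) : ℕ → Set (Euc d)
  | 0 => op (q 0) A
  | n + 1 => op (q (n + 1)) (iter op A q n)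

theorem iterOp_eq {Ω : Type*} (A : Set (Euc d)) (Sp : ℕ → Ω → Metric.sphere (0 : Euc d) 1) (n : ℕ)
    (ω : Ω) : iterOp op A Sp n ω = iter op A (fun i => Sp i ω) n := by
  induction n with
  | zero => rfl
  | succ n ih => simp [iterOp, iter, ih]

theorem iter_congr (A : Set (Euc d)) {q q' : ℕ → Metric.sphere (0 : Euc d) 1} (n : ℕ)
    (h : ∀ i ≤ n, q i = q' i) : iter op A q n = iter op A q' n := by
  induction n with
  | zero => simp [iter, h]
  | succ n ih => simp only [iter]; rw [ih fun i hi => h i (by lia), h _ le_rfl]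

theorem iter_add (A : Set (Euc d)) (q : ℕ → Metric.sphere (0 : Euc d) 1) (n k : ℕ) :
    iter op (iter op A q n) (fun i => q (n + 1 + i)) k = iter op A q (n + 1 + k) := by
  induction k with
  | zero => rfl
  | succ k ih =>
    rw [← add_assoc]
    simp only [iter, ih]
    rfl

/-- A property stable under symmetrizations passes to iterates. -/
theorem iter_induction (P : Set (Euc d) → Prop) (hP : ∀ u A, P A → P (op u A)) {A : Set (Euc d)}
    (hA : P A) (q : ℕ → Metric.sphere (0 : Euc d) 1) (n : ℕ) : P (iter op A q n) := by
  induction n with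
  | zero => exact hP _ _ hA
  | succ n ih => exact hP _ _ ih

theorem measurableSet_iter (hop : IsSteinerOp op) {A : Set (Euc d)} (hA : MeasurableSet A)
    (q : ℕ → Metric.sphere (0 : Euc d) 1) (n : ℕ) : MeasurableSet (iter op A q n) :=
  iter_induction MeasurableSet (fun u _ h => measurableSet_op hop u h) hA q n

theorem volume_iter (hop : IsSteinerOp op) {A : Set (Euc d)} (hA : MeasurableSet A)
    (q : ℕ → Metric.sphere (0 : Euc d) 1) (n : ℕ) : volume (iter op A q n) = volume A :=
  (iter_induction (fun B => MeasurableSet B ∧ volume B = volume A)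
    (fun u _ h => ⟨measurableSet_op hop u h.1, (volume_op hop u h.1).trans h.2⟩)
    ⟨hA, rfl⟩ q n).2

theorem volume_symmDiff_iter_le (hop : IsSteinerOp op) {A B : Set (Euc d)} (hA : MeasurableSet A)
    (hB : MeasurableSet B) (hA' : volume A ≠ ⊤) (hB' : volume B ≠ ⊤)
    (q : ℕ → Metric.sphere (0 : Euc d) 1) (n : ℕ) :
    volume (symmDiff (iter op A q n) (iter op B q n)) ≤ volume (symmDiff A B) := by
  induction n with
  | zero => exact volume_symmDiff_op_le hop _ hA hB hA' hB'
  | succ n ih =>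
    refine (volume_symmDiff_op_le hop _ (measurableSet_iter hop hA q n)
      (measurableSet_iter hop hB q n) ?_ ?_).trans ih <;> rwa [volume_iter hop (by assumption)]

/-- The iterated symmetral depends continuously on the directions. -/
theorem tendsto_iter (hop : IsSteinerOp op) {A : Set (Euc d)} (hA : MeasurableSet A)
    (hfin : volume A ≠ ⊤) (q₀ : ℕ → Metric.sphere (0 : Euc d) 1) (n : ℕ) :
    Tendsto (fun q => volume (symmDiff (iter op A q n) (iter op A q₀ n))) (𝓝 q₀) (𝓝 0) := by
  induction n with
  | zero => exact (tendsto_op hop (q₀ 0) hA hfin).comp ((continuous_apply 0).tendsto q₀)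
  | succ n ih =>
    have hm := measurableSet_iter hop hA q₀ n
    have hf : volume (iter op A q₀ n) ≠ ⊤ := by rwa [volume_iter hop hA]
    have h := ih.add ((tendsto_op hop (q₀ (n + 1)) hm hf).comp
      ((continuous_apply (n + 1)).tendsto q₀))
    rw [add_zero] at h
    refine tendsto_of_tendsto_of_tendsto_of_le_of_le tendsto_const_nhds h (fun _ => zero_le) ?_
    intro q
    refine (measure_symmDiff_le _ (op (q (n + 1)) (iter op A q₀ n)) _).trans ?_
    refine add_le_add (volume_symmDiff_op_le hop _ (measurableSet_iter hop hA q n) hm ?_ hf) le_rfl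
    rwa [volume_iter hop hA]

/-- A set functional which is finite and `1`-Lipschitz for the distance in measure is continuous
along iterated symmetrals. -/
theorem continuous_iter (hop : IsSteinerOp op) {A : Set (Euc d)} (hA : MeasurableSet A)
    (hfin : volume A ≠ ⊤) (n : ℕ) (Φ : Set (Euc d) → ℝ≥0∞)
    (hΦ : ∀ B C, Φ B ≤ Φ C + volume (symmDiff B C)) (hΦ' : ∀ q, Φ (iter op A q n) ≠ ⊤) :
    Continuous fun q : ℕ → Metric.sphere (0 : Euc d) 1 => Φ (iter op A q n) := by
  rw [continuous_iff_continuousAt]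
  intro q₀
  rw [ContinuousAt, ENNReal.tendsto_nhds (hΦ' q₀)]
  intro ε hε
  have := ENNReal.tendsto_nhds_zero.1 (tendsto_iter hop hA hfin q₀ n) ε hε
  filter_upwards [this] with q hq
  constructor
  · rw [tsub_le_iff_right]
    refine (hΦ _ (iter op A q n)).trans ?_
    rw [symmDiff_comm]
    exact add_le_add le_rfl hq
  · exact (hΦ _ (iter op A q₀ n)).trans (add_le_add le_rfl hq)

theorem energy_iter_mono (hop : IsSteinerOp op) {A : Set (Euc d)} (hA : MeasurableSet A)
    (hfin : volume A ≠ ⊤) (q : ℕ → Metric.sphere (0 : Euc d) 1) :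
    Monotone fun n => energy d (iter op A q n) :=
  monotone_nat_of_le_succ fun n => (energy_op hop _ (measurableSet_iter hop hA q n)
    (by rwa [volume_iter hop hA])).1

theorem symmDiff_zero_trans {A B C : Set (Euc d)} (h1 : volume (symmDiff A B) = 0)
    (h2 : volume (symmDiff B C) = 0) : volume (symmDiff A C) = 0 := by
  have := measure_symmDiff_le (μ := volume) A B C
  rw [h1, h2, add_zero] at this
  exact le_antisymm this (zero_le)

/-- If the last direction moves `A`, then the energy increases strictly along the sequence. -/
theorem energy_lt_iter (hop : IsSteinerOp op) {A : Set (Euc d)} (hA : MeasurableSet A)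
    (hfin : volume A ≠ ⊤) (q : ℕ → Metric.sphere (0 : Euc d) 1) (n : ℕ)
    (h : 0 < volume (symmDiff A (op (q n) A))) : energy d A < energy d (iter op A q n) := by
  by_contra hle
  rw [not_lt] at hle
  have hm := measurableSet_iter hop hA q
  have hf : ∀ k, volume (iter op A q k) ≠ ⊤ := fun k => by rwa [volume_iter hop hA]
  have h0 : energy d A ≤ energy d (iter op A q 0) := (energy_op hop _ hA hfin).1
  have hmono := energy_iter_mono hop hA hfin q
  have key : ∀ k ≤ n, volume (symmDiff A (iter op A q k)) = 0 := by
    intro k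
    induction k with
    | zero => exact fun _ => (energy_op hop _ hA hfin).2 ((hmono (Nat.zero_le n)).trans hle)
    | succ k ih =>
      intro hk
      refine symmDiff_zero_trans (ih (by lia)) ((energy_op hop _ (hm k) (hf k)).2 ?_)
      exact ((hmono hk).trans hle).trans (h0.trans (hmono (Nat.zero_le k)))
  cases n with
  | zero => exact h.ne' (key 0 le_rfl)
  | succ n =>
    refine h.ne' (symmDiff_zero_trans (key _ le_rfl) ?_)
    refine le_antisymm ((volume_symmDiff_op_le hop _ (hm n) hA (hf n) hfin).trans ?_) (zero_le)
    rw [symmDiff_comm]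
    exact (key n (by lia)).le

/-! ### Balls and a compact class of sets -/

theorem volume_op_ball (hop : IsSteinerOp op) (v : Metric.sphere (0 : Euc d) 1) (R : ℝ) :
    volume (symmDiff (op v (Metric.ball 0 R)) (Metric.ball 0 R)) = 0 := by
  have hm : MeasurableSet (Metric.ball (0 : Euc d) R) := measurableSet_ball
  have hsub := op_subset_ball hop v hm subset_rfl
  rw [symmDiff_of_le hsub, measure_sdiff hsub (measurableSet_op hop v hm).nullMeasurableSet,
    volume_op hop v hm, tsub_self]
  rw [volume_op hop v hm]
  exact measure_ball_lt_top.ne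

theorem volume_symmDiff_op_ball_le (hop : IsSteinerOp op) (v : Metric.sphere (0 : Euc d) 1)
    {A : Set (Euc d)} (hA : MeasurableSet A) (hA' : volume A ≠ ⊤) (R : ℝ) :
    volume (symmDiff (op v A) (Metric.ball 0 R)) ≤ volume (symmDiff A (Metric.ball 0 R)) := by
  refine (measure_symmDiff_le _ (op v (Metric.ball 0 R)) _).trans ?_
  rw [volume_op_ball hop, add_zero]
  exact volume_symmDiff_op_le hop v hA measurableSet_ball hA' measure_ball_lt_top.ne

theorem volume_symmDiff_ball (R S : ℝ) :
    volume (symmDiff (Metric.ball (0 : Euc d) R) (Metric.ball 0 S)) ≤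
      (volume (Metric.ball (0 : Euc d) R) - volume (Metric.ball (0 : Euc d) S)) +
      (volume (Metric.ball (0 : Euc d) S) - volume (Metric.ball (0 : Euc d) R)) := by
  rcases le_total R S with h | h
  · have hs : Metric.ball (0 : Euc d) R ⊆ Metric.ball 0 S := Metric.ball_subset_ball h
    rw [symmDiff_of_le hs, measure_sdiff hs measurableSet_ball.nullMeasurableSet
      measure_ball_lt_top.ne]
    exact le_add_self
  · have hs : Metric.ball (0 : Euc d) S ⊆ Metric.ball 0 R := Metric.ball_subset_ball h
    rw [symmDiff_of_ge hs, measure_sdiff hs measurableSet_ball.nullMeasurableSet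
      measure_ball_lt_top.ne]
    exact le_self_add

variable {star : Set (Euc d) → Set (Euc d)}

theorem volume_symmDiff_star_le (hstar : IsSphericalRearrangement star) {A B : Set (Euc d)}
    (hA : MeasurableSet A) (hB : MeasurableSet B) (hA' : volume A < ⊤) (hB' : volume B < ⊤) :
    volume (symmDiff (star A) (star B)) ≤
      (volume A - volume B) + (volume B - volume A) := by
  obtain ⟨⟨R, hR⟩, h1⟩ := hstar A hA hA'
  obtain ⟨⟨S, hS⟩, h2⟩ := hstar B hB hB'
  rw [← h1, ← h2, hR, hS]
  exact volume_symmDiff_ball R S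

/-- The sets contained in `ball 0 R`, with the volume of `K`, whose thickenings are no larger in
volume than those of `K`. This class is stable under symmetrization, and the control of
thickenings makes it precompact for the distance in measure. -/
structure Cls (K : Set (Euc d)) (R : ℝ) (A : Set (Euc d)) : Prop where
  meas : MeasurableSet A
  sub : A ⊆ Metric.ball 0 R
  vol : volume A = volume K
  thick : ∀ r, volume (Metric.thickening r A) ≤ volume (Metric.thickening r K)

theorem Cls.op_mem (hop : IsSteinerOp op) {K : Set (Euc d)} {R : ℝ}
    (v : Metric.sphere (0 : Euc d) 1) {A : Set (Euc d)} (h : Cls K R A) : Cls K R (op v A) where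
  meas := measurableSet_op hop v h.meas
  sub := op_subset_ball hop v h.meas h.sub
  vol := (volume_op hop v h.meas).trans h.vol
  thick r := by
    refine (measure_mono (thickening_op_subset hop v h.meas h.sub r)).trans ?_
    rw [volume_op hop v Metric.isOpen_thickening.measurableSet]
    exact h.thick r

theorem tendsto_volume_thickening_diff {K : Set (Euc d)} (hK : IsCompact K) {ε : ℝ≥0∞}
    (hε : 0 < ε) : ∃ r > 0, volume (Metric.thickening r K \ K) ≤ ε := by
  have h1 : ∃ r > 0, volume (Metric.thickening r K) ≠ ⊤ :=
    ⟨1, one_pos, hK.isBounded.thickening.measure_lt_top.ne⟩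
  have h2 := tendsto_measure_thickening_of_isClosed (μ := volume) h1 hK.isClosed
  have hfin : volume K ≠ ⊤ := hK.measure_lt_top.ne
  have h3 := (ENNReal.tendsto_nhds hfin).1 h2 ε hε
  obtain ⟨r, hr, hr0⟩ := (h3.and self_mem_nhdsWithin).exists
  refine ⟨r, hr0, ?_⟩
  rw [measure_sdiff (Metric.self_subset_thickening hr0 K) hK.measurableSet.nullMeasurableSet hfin,
    tsub_le_iff_left]
  exact hr.2

/-- Sequential compactness, from Blaschke's selection principle: if the closures of the sets
converge to `C` for the Hausdorff distance, the thickening bounds upgrade this to convergence in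
measure. -/
theorem exists_subseq {K : Set (Euc d)} {R : ℝ} (hK : IsCompact K) (hpos : 0 < volume K)
    (A : ℕ → Set (Euc d)) (hA : ∀ k, Cls K R (A k)) :
    ∃ C : Set (Euc d), IsCompact C ∧ ∃ φ : ℕ → ℕ, StrictMono φ ∧
      Tendsto (fun k => volume (symmDiff (A (φ k)) C)) atTop (𝓝 0) := by
  have hKfin : volume K ≠ ⊤ := hK.measure_lt_top.ne
  have hne : ∀ k, (A k).Nonempty := fun k => by
    rw [Set.nonempty_iff_ne_empty]
    intro h
    have := (hA k).vol
    rw [h, measure_empty] at this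
    exact hpos.ne this
  have hcl : ∀ k, closure (A k) ⊆ Metric.closedBall 0 R := fun k =>
    closure_minimal ((hA k).sub.trans Metric.ball_subset_closedBall) Metric.isClosed_closedBall
  let T : ℕ → TopologicalSpace.NonemptyCompacts (Euc d) := fun k =>
    ⟨⟨closure (A k), (isCompact_closedBall 0 R).of_isClosed_subset isClosed_closure (hcl k)⟩,
      (hne k).closure⟩
  have hcomp := TopologicalSpace.NonemptyCompacts.isCompact_subsets_of_isCompact
    (isCompact_closedBall (0 : Euc d) R)
  obtain ⟨C, -, φ, hφ, hlim⟩ := hcomp.tendsto_subseq (x := T) (fun k => hcl k)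
  refine ⟨C, C.isCompact, φ, hφ, ?_⟩
  rw [ENNReal.tendsto_nhds_zero]
  intro ε hε
  have hε2 : 0 < ε / 2 := ENNReal.half_pos hε.ne'
  obtain ⟨r₁, hr₁, h1⟩ := tendsto_volume_thickening_diff C.isCompact hε2
  obtain ⟨r₂, hr₂, h2⟩ := tendsto_volume_thickening_diff hK hε2
  have hev := (Metric.tendsto_nhds.1 hlim) (min r₁ r₂) (lt_min hr₁ hr₂)
  filter_upwards [hev] with k hk
  have hk' : Metric.hausdorffDist (closure (A (φ k))) (C : Set (Euc d)) < min r₁ r₂ := by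
    have h := hk
    rw [Metric.NonemptyCompacts.dist_eq] at h
    exact h
  have hfin : Metric.hausdorffEDist (closure (A (φ k))) (C : Set (Euc d)) ≠ ⊤ :=
    Metric.hausdorffEDist_ne_top_of_nonempty_of_bounded (hne _).closure C.nonempty
      (T (φ k)).isCompact.isBounded C.isCompact.isBounded
  have s1 : A (φ k) ⊆ Metric.thickening r₁ (C : Set (Euc d)) := by
    intro x hx
    obtain ⟨y, hy, hxy⟩ := Metric.exists_dist_lt_of_hausdorffDist_lt (subset_closure hx) hk' hfin
    exact Metric.mem_thickening_iff.2 ⟨y, hy, hxy.trans_le (min_le_left _ _)⟩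
  have s2 : (C : Set (Euc d)) ⊆ Metric.thickening r₂ (A (φ k)) := by
    intro y hy
    obtain ⟨x, hx, hxy⟩ := Metric.exists_dist_lt_of_hausdorffDist_lt' hy hk' hfin
    rw [← Metric.thickening_closure]
    refine Metric.mem_thickening_iff.2 ⟨x, hx, ?_⟩
    rw [dist_comm]
    exact hxy.trans_le (min_le_right _ _)
  have hm := (hA (φ k)).meas
  rw [volume_symmDiff hm C.isCompact.measurableSet]
  have b1 : volume (A (φ k) \ C) ≤ ε / 2 :=
    (measure_mono (Set.sdiff_subset_sdiff_left s1)).trans h1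
  have b2 : volume ((C : Set (Euc d)) \ A (φ k)) ≤ ε / 2 := by
    refine (measure_mono (Set.sdiff_subset_sdiff_left s2)).trans (le_trans ?_ h2)
    rw [measure_sdiff (Metric.self_subset_thickening hr₂ _) hm.nullMeasurableSet
      (by rwa [(hA _).vol]), measure_sdiff (Metric.self_subset_thickening hr₂ _)
      hK.measurableSet.nullMeasurableSet hKfin, (hA _).vol]
    exact tsub_le_tsub_right ((hA _).thick _) _
  calc _ ≤ ε / 2 + ε / 2 := add_le_add b1 b2
    _ = ε := ENNReal.add_halves ε

theorem volume_le_add_symmDiff (A B : Set (Euc d)) :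
    volume A ≤ volume B + volume (symmDiff A B) := by
  calc volume A ≤ volume (B ∪ A \ B) := measure_mono (by simp)
    _ ≤ volume B + volume (A \ B) := measure_union_le _ _
    _ ≤ _ := add_le_add le_rfl (measure_mono Set.subset_union_left)

theorem volume_eq_of_tendsto {A : ℕ → Set (Euc d)} {C : Set (Euc d)} {c : ℝ≥0∞}
    (hA : ∀ k, volume (A k) = c)
    (h : Tendsto (fun k => volume (symmDiff (A k) C)) atTop (𝓝 0)) : volume C = c := by
  have h1 : Tendsto (fun k => c + volume (symmDiff (A k) C)) atTop (𝓝 (c + 0)) :=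
    tendsto_const_nhds.add h
  have h2 : Tendsto (fun k => volume C + volume (symmDiff (A k) C)) atTop (𝓝 (volume C + 0)) :=
    tendsto_const_nhds.add h
  rw [add_zero] at h1 h2
  apply le_antisymm
  · refine ge_of_tendsto' h1 fun k => ?_
    rw [← hA k, symmDiff_comm]
    exact volume_le_add_symmDiff _ _
  · refine ge_of_tendsto' h2 fun k => ?_
    rw [← hA k]
    exact volume_le_add_symmDiff _ _

/-! ### Uniform gain of energy near the recurrent direction -/

/-- Extension of a finite sequence to an infinite one, by periodicity; the values beyond `n` are
irrelevant. -/
def ext {S : Type*} {n : ℕ} (p : Fin (n + 1) → S) : ℕ → S := fun i => p (Fin.ofNat (n + 1) i)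

theorem ext_last {S : Type*} {n : ℕ} (p : Fin (n + 1) → S) : ext p n = p (Fin.last n) := by
  unfold ext
  congr 1
  ext
  simp [Fin.ofNat]

theorem ext_apply {S : Type*} {n : ℕ} (f : ℕ → S) {i : ℕ} (hi : i ≤ n) :
    ext (fun j : Fin (n + 1) => f j) i = f i := by
  simp only [ext, Fin.val_ofNat]
  rw [Nat.mod_eq_of_lt (by lia)]

theorem continuous_ext {S : Type*} [TopologicalSpace S] {n : ℕ} :
    Continuous (ext : (Fin (n + 1) → S) → ℕ → S) :=
  continuous_pi fun _ => continuous_apply _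

theorem energy_iter_ne_top (hop : IsSteinerOp op) {A : Set (Euc d)} (hA : MeasurableSet A)
    (hfin : volume A ≠ ⊤) (q : ℕ → Metric.sphere (0 : Euc d) 1) (n : ℕ) :
    energy d (iter op A q n) ≠ ⊤ :=
  ne_top_of_le_ne_top hfin ((energy_le _).trans (volume_iter hop hA q n).le)

theorem continuous_energy_iter (hop : IsSteinerOp op) {A : Set (Euc d)} (hA : MeasurableSet A)
    (hfin : volume A ≠ ⊤) (n : ℕ) :
    Continuous fun q : ℕ → Metric.sphere (0 : Euc d) 1 => energy d (iter op A q n) :=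
  continuous_iter hop hA hfin n _ energy_le_add fun q => energy_iter_ne_top hop hA hfin q n

/-- Quantitative form of the hypotheses: near `ℓ`, a set of the class at distance at least `ε` from
the ball gains a definite amount of energy with definite probability in a bounded number of steps.
This follows by compactness from the discrimination hypothesis at `ℓ`, lower semicontinuity
carrying the positive probability over to nearby starting points. -/
theorem uniform_gain (hop : IsSteinerOp op) (hstar : IsSphericalRearrangement star)
    (κ : Kernel (Metric.sphere (0 : Euc d) 1) (Metric.sphere (0 : Euc d) 1))
    (ℓ : Metric.sphere (0 : Euc d) 1)
    (hcont : ∀ (n : ℕ) (O : Set (Fin (n + 1) → Metric.sphere (0 : Euc d) 1)), IsOpen O →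
      LowerSemicontinuousAt (fun s => iterK κ n s O) ℓ)
    (hdiscr : ∀ X : Set (Euc d), MeasurableSet X → volume X < ⊤ →
      0 < volume (symmDiff X (star X)) →
      0 < ∑' n : ℕ, iterK κ n ℓ
        {p : Fin (n + 1) → Metric.sphere (0 : Euc d) 1 |
          0 < volume (symmDiff X (op (p (Fin.last n)) X))})
    {K : Set (Euc d)} {R : ℝ} (hK : IsCompact K) (hpos : 0 < volume K) {ε : ℝ≥0∞} (hε : 0 < ε) :
    ∃ N : ℕ, ∃ δ : ℝ≥0∞, 0 < δ ∧ δ ≠ ⊤ ∧ ∃ O : Set (Metric.sphere (0 : Euc d) 1), IsOpen O ∧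
      ℓ ∈ O ∧ ∀ s ∈ O, ∀ A, Cls K R A → ε ≤ volume (symmDiff A (star K)) → ∃ n ≤ N,
        δ ≤ iterK κ n s {p | energy d A + δ < energy d (iter op A (ext p) n)} := by
  by_contra hcon
  push Not at hcon
  have hδ : ∀ k : ℕ, (0 : ℝ≥0∞) < (k + 1 : ℝ≥0∞)⁻¹ := fun k => by
    rw [ENNReal.inv_pos]; exact ENNReal.add_ne_top.2 ⟨ENNReal.natCast_ne_top k, ENNReal.one_ne_top⟩
  have hδ' : ∀ k : ℕ, (k + 1 : ℝ≥0∞)⁻¹ ≠ ⊤ := fun k => by simp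
  have hδ0 : Tendsto (fun k : ℕ => (k + 1 : ℝ≥0∞)⁻¹) atTop (𝓝 0) := by
    have := (tendsto_add_atTop_iff_nat 1).2 ENNReal.tendsto_inv_nat_nhds_zero
    simpa using this
  choose s hs A hA hAε hAn using fun k : ℕ => hcon k (k + 1 : ℝ≥0∞)⁻¹ (hδ k) (hδ' k)
    (Metric.ball ℓ (1 / ((k : ℝ) + 1))) Metric.isOpen_ball
    (Metric.mem_ball_self (by positivity))
  have hslim : Tendsto s atTop (𝓝 ℓ) := by
    rw [tendsto_iff_dist_tendsto_zero]
    exact squeeze_zero (fun _ => dist_nonneg) (fun k => (Metric.mem_ball.1 (hs k)).le)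
      tendsto_one_div_add_atTop_nhds_zero_nat
  obtain ⟨C, hC, φ, hφ, hlim⟩ := exists_subseq hK hpos A hA
  have hCm := hC.measurableSet
  have hCf : volume C ≠ ⊤ := hC.measure_lt_top.ne
  have hKf : volume K ≠ ⊤ := hK.measure_lt_top.ne
  have hCK : volume C = volume K := volume_eq_of_tendsto (fun k => (hA (φ k)).vol) hlim
  have hCε : ε ≤ volume (symmDiff C (star K)) := by
    have h1 : Tendsto (fun k => volume (symmDiff (A (φ k)) C) + volume (symmDiff C (star K)))
        atTop (𝓝 (0 + volume (symmDiff C (star K)))) := hlim.add tendsto_const_nhds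
    rw [zero_add] at h1
    exact ge_of_tendsto' h1 fun k => (hAε (φ k)).trans (measure_symmDiff_le _ _ _)
  have hst : volume (symmDiff (star C) (star K)) = 0 := by
    have := volume_symmDiff_star_le hstar hCm hK.measurableSet hCf.lt_top hKf.lt_top
    rw [hCK, tsub_self, add_zero] at this
    exact le_antisymm this zero_le
  have hCpos : 0 < volume (symmDiff C (star C)) := by
    refine (hε.trans_le hCε).trans_le ((measure_symmDiff_le _ (star C) _).trans ?_)
    rw [hst, add_zero]
  have hsum := hdiscr C hCm hCf.lt_top hCpos
  obtain ⟨n, hn⟩ : ∃ n, iterK κ n ℓ {p : Fin (n + 1) → Metric.sphere (0 : Euc d) 1 |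
      0 < volume (symmDiff C (op (p (Fin.last n)) C))} ≠ 0 := by
    by_contra hall
    push Not at hall
    rw [ENNReal.tsum_eq_zero.2 hall] at hsum
    exact lt_irrefl _ hsum
  let U : ℕ → Set (Fin (n + 1) → Metric.sphere (0 : Euc d) 1) := fun j =>
    {p | energy d C + 3 * (j + 1 : ℝ≥0∞)⁻¹ < energy d (iter op C (ext p) n)}
  have hUo : ∀ j, IsOpen (U j) := fun j => isOpen_lt continuous_const
    ((continuous_energy_iter hop hCm hCf n).comp continuous_ext)
  have hCe : energy d C ≠ ⊤ := ne_top_of_le_ne_top hCf (energy_le C)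
  obtain ⟨j, hj⟩ : ∃ j, iterK κ n ℓ (U j) ≠ 0 := by
    by_contra hall
    push Not at hall
    refine hn (measure_mono_null ?_ (measure_iUnion_null hall))
    intro p hp
    have hp' : 0 < volume (symmDiff C (op (ext p n) C)) := by rw [ext_last]; exact hp
    have hlt := energy_lt_iter hop hCm hCf (ext p) n hp'
    have h3 : Tendsto (fun j : ℕ => energy d C + 3 * (j + 1 : ℝ≥0∞)⁻¹) atTop
        (𝓝 (energy d C + 3 * 0)) :=
      tendsto_const_nhds.add (ENNReal.Tendsto.const_mul hδ0 (Or.inr (by simp)))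
    rw [mul_zero, add_zero] at h3
    obtain ⟨j, hj⟩ := (h3.eventually (gt_mem_nhds hlt)).exists
    exact Set.mem_iUnion.2 ⟨j, hj⟩
  obtain ⟨η, hη0, hη⟩ := exists_between (pos_iff_ne_zero.2 hj)
  set δ : ℝ≥0∞ := (j + 1 : ℝ≥0∞)⁻¹ with hδd
  have hev1 := (hslim.comp hφ.tendsto_atTop).eventually (hcont n (U j) (hUo j) η hη)
  have hev2 := hlim.eventually (gt_mem_nhds (hδ j))
  have hev3 := (hδ0.comp hφ.tendsto_atTop).eventually (gt_mem_nhds (hδ j))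
  have hev4 := (hδ0.comp hφ.tendsto_atTop).eventually (gt_mem_nhds hη0)
  have hev5 := hφ.tendsto_atTop.eventually (eventually_ge_atTop n)
  obtain ⟨k, h1, h2, h3, h4, h5⟩ :=
    (hev1.and (hev2.and (hev3.and (hev4.and hev5)))).exists
  have hAk := hA (φ k)
  have hAf : volume (A (φ k)) ≠ ⊤ := by rwa [hAk.vol]
  refine lt_irrefl _ ((hAn (φ k) n h5).trans (h4.trans (h1.trans_le (measure_mono ?_))))
  intro p hp
  have hp' : energy d C + 3 * δ < energy d (iter op C (ext p) n) := hp
  have i1 : energy d (A (φ k)) ≤ energy d C + δ :=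
    (energy_le_add _ _).trans (add_le_add le_rfl h2.le)
  have i2 : energy d (iter op C (ext p) n) ≤ energy d (iter op (A (φ k)) (ext p) n) + δ := by
    refine (energy_le_add _ _).trans (add_le_add le_rfl (le_trans ?_ h2.le))
    rw [symmDiff_comm]
    exact volume_symmDiff_iter_le hop hAk.meas hCm hAf hCf _ _
  have i3 : energy d (A (φ k)) + δ + δ < energy d (iter op (A (φ k)) (ext p) n) + δ := by
    refine lt_of_le_of_lt ?_ (hp'.trans_le i2)
    calc _ ≤ energy d C + δ + δ + δ := by gcongr
      _ = _ := by ring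
  exact lt_of_le_of_lt (add_le_add le_rfl h3.le) (lt_of_add_lt_add_right i3)

/-! ### The Markov property for blocks of steps -/

theorem measurable_snoc {S : Type*} [MeasurableSpace S] (k : ℕ) :
    Measurable fun x : (Fin (k + 1) → S) × S => (Fin.snoc x.1 x.2 : Fin (k + 2) → S) := by
  rw [measurable_pi_iff]
  intro i
  refine Fin.lastCases ?_ (fun j => ?_) i
  · simp only [Fin.snoc_last]; exact measurable_snd
  · simp only [Fin.snoc_castSucc]; exact (measurable_pi_apply j).comp measurable_fst

/-- The kernel appending to a finite sequence one step of the chain. -/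
def stepKernel {S : Type*} [MeasurableSpace S] (κ : Kernel S S) (k : ℕ) :
    Kernel (Fin (k + 1) → S) (Fin (k + 2) → S) :=
  (Kernel.id ×ₖ κ.comap (fun p : Fin (k + 1) → S => p (Fin.last k)) (measurable_pi_apply _)).map
    fun x => Fin.snoc x.1 x.2

theorem stepKernel_apply {S : Type*} [MeasurableSpace S] (κ : Kernel S S) [IsMarkovKernel κ]
    (k : ℕ) (p : Fin (k + 1) → S) :
    stepKernel κ k p = (κ (p (Fin.last k))).map (Fin.snoc p) := by
  rw [stepKernel, Kernel.map_apply _ (measurable_snoc k), Kernel.prod_apply, Kernel.id_apply,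
    Measure.dirac_prod, Measure.map_map (measurable_snoc k) measurable_prodMk_left]
  rfl

theorem iterK_succ {S : Type*} [MeasurableSpace S] (κ : Kernel S S) [IsMarkovKernel κ]
    (k : ℕ) (s : S) : iterK κ (k + 1) s = (iterK κ k s).bind (stepKernel κ k) := by
  rw [iterK]
  congr 1
  funext p
  rw [stepKernel_apply]

instance {S : Type*} [MeasurableSpace S] (κ : Kernel S S) [IsMarkovKernel κ] (k : ℕ) :
    IsMarkovKernel (stepKernel κ k) := by
  rw [stepKernel]
  exact Kernel.IsMarkovKernel.map _ (measurable_snoc k)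

theorem measurable_iterK {S : Type*} [MeasurableSpace S] (κ : Kernel S S) [IsMarkovKernel κ]
    (k : ℕ) : Measurable (iterK κ k) := by
  induction k with
  | zero => exact (Measure.measurable_map _ (by fun_prop)).comp κ.measurable
  | succ k ih =>
    have : iterK κ (k + 1) = fun s => (iterK κ k s).bind (stepKernel κ k) :=
      funext (iterK_succ κ k)
    rw [this]
    exact (Measure.measurable_bind' (stepKernel κ k).measurable).comp ih

/-- The iterated kernels as bundled kernels. -/
def iterKernel {S : Type*} [MeasurableSpace S] (κ : Kernel S S) [IsMarkovKernel κ] (k : ℕ) :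
    Kernel S (Fin (k + 1) → S) := ⟨iterK κ k, measurable_iterK κ k⟩

instance {S : Type*} [MeasurableSpace S] (κ : Kernel S S) [IsMarkovKernel κ] (k : ℕ) :
    IsMarkovKernel (iterKernel κ k) := by
  refine ⟨fun s => ?_⟩
  change IsProbabilityMeasure (iterK κ k s)
  induction k with
  | zero => exact Measure.isProbabilityMeasure_map (by fun_prop)
  | succ k ih =>
    rw [iterK_succ]
    have := ih
    infer_instance

theorem lintegral_iterK_succ {S : Type*} [MeasurableSpace S] (κ : Kernel S S) [IsMarkovKernel κ]
    (k : ℕ) (s : S) {f : (Fin (k + 2) → S) → ℝ≥0∞} (hf : Measurable f) :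
    ∫⁻ p, f p ∂(iterK κ (k + 1) s) =
      ∫⁻ p, (∫⁻ x, f (Fin.snoc p x) ∂(κ (p (Fin.last k)))) ∂(iterK κ k s) := by
  rw [iterK_succ, Measure.lintegral_bind (stepKernel κ k).measurable.aemeasurable hf.aemeasurable]
  refine lintegral_congr fun p => ?_
  rw [stepKernel_apply, lintegral_map hf]
  exact (measurable_snoc k).comp measurable_prodMk_left

/-- The `σ`-algebra generated by the first `n + 1` steps. -/
abbrev past {Ω S : Type*} [MeasurableSpace S] (Sp : ℕ → Ω → S) (n : ℕ) : MeasurableSpace Ω :=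
  ⨆ i : Fin (n + 1), MeasurableSpace.comap (Sp i) inferInstance

theorem measurable_past {Ω S : Type*} [MeasurableSpace S] (Sp : ℕ → Ω → S) {i n : ℕ}
    (h : i ≤ n) : Measurable[past Sp n] (Sp i) := by
  rw [measurable_iff_comap_le]
  exact le_iSup (fun i : Fin (n + 1) => MeasurableSpace.comap (Sp i) inferInstance)
    (⟨i, by lia⟩ : Fin (n + 1))

theorem past_mono {Ω S : Type*} [MeasurableSpace S] (Sp : ℕ → Ω → S) {m n : ℕ}
    (h : m ≤ n) : past Sp m ≤ past Sp n :=
  iSup_le fun i => (measurable_past Sp (i := i) (n := n) (by lia)).comap_le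

section Markov

variable {Ω S : Type*} [MeasurableSpace Ω] [MeasurableSpace S] {Pr : Measure Ω}
  {κ : Kernel S S} {Sp : ℕ → Ω → S}

theorem past_le (hM : IsMarkovChain Pr κ Sp) (n : ℕ) : past Sp n ≤ ‹MeasurableSpace Ω› :=
  iSup_le fun i => (hM.1 i).comap_le

/-- Functional form of the Markov property, for one step. -/
theorem markov_one [IsProbabilityMeasure Pr] [IsMarkovKernel κ] (hM : IsMarkovChain Pr κ Sp)
    (n : ℕ) {T : Type*} [MeasurableSpace T]
    {Z : Ω → T} (hZ : Measurable[past Sp n] Z) {g : T × S → ℝ≥0∞} (hg : Measurable g) :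
    ∫⁻ ω, g (Z ω, Sp (n + 1) ω) ∂Pr = ∫⁻ ω, (∫⁻ x, g (Z ω, x) ∂(κ (Sp n ω))) ∂Pr := by
  have hZ' : Measurable Z := hZ.mono (past_le hM n) le_rfl
  have hl : Measurable fun ω => (Z ω, Sp (n + 1) ω) := hZ'.prodMk (hM.1 _)
  have hr : Measurable (Prod.map Z id : Ω × S → T × S) := hZ'.prodMap measurable_id
  have key : Pr.map (fun ω => (Z ω, Sp (n + 1) ω)) =
      (Pr ⊗ₘ (κ.comap (Sp n) (hM.1 n))).map (Prod.map Z id) := by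
    have : IsProbabilityMeasure (Pr.map (fun ω => (Z ω, Sp (n + 1) ω))) :=
      Measure.isProbabilityMeasure_map hl.aemeasurable
    refine Measure.ext_prod fun {B A} hB hA => ?_
    rw [Measure.map_apply hl (hB.prod hA), Measure.map_apply hr (hB.prod hA)]
    have e : (Prod.map Z id : Ω × S → T × S) ⁻¹' (B ×ˢ A) = (Z ⁻¹' B) ×ˢ A := rfl
    rw [e, Measure.compProd_apply_prod (hZ' hB) hA]
    exact hM.2 n A hA (Z ⁻¹' B) (hZ hB)
  calc ∫⁻ ω, g (Z ω, Sp (n + 1) ω) ∂Pr = ∫⁻ y, g y ∂(Pr.map (fun ω => (Z ω, Sp (n + 1) ω))) :=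
        (lintegral_map hg hl).symm
    _ = _ := by
        rw [key, lintegral_map hg hr]
        exact Measure.lintegral_compProd (hg.comp hr)

/-- Functional form of the Markov property: given the past up to time `n`, the law of the next
`k + 1` steps is `iterK κ k (Sp n)`. -/
theorem markov_block [IsProbabilityMeasure Pr] [IsMarkovKernel κ] (hM : IsMarkovChain Pr κ Sp)
    (n : ℕ) {T : Type*} [MeasurableSpace T]
    {Z : Ω → T} (hZ : Measurable[past Sp n] Z) (k : ℕ) {g : T × (Fin (k + 1) → S) → ℝ≥0∞}
    (hg : Measurable g) :
    ∫⁻ ω, g (Z ω, fun i => Sp (n + 1 + i) ω) ∂Pr =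
      ∫⁻ ω, (∫⁻ p, g (Z ω, p) ∂(iterK κ k (Sp n ω))) ∂Pr := by
  induction k with
  | zero =>
    have h1 : Measurable fun x : T × S => ((x.1, fun _ => x.2) : T × (Fin 1 → S)) := by fun_prop
    have h := markov_one hM n hZ (hg.comp h1)
    calc _ = ∫⁻ ω, (g ∘ fun x : T × S => ((x.1, fun _ => x.2) : T × (Fin 1 → S)))
          (Z ω, Sp (n + 1) ω) ∂Pr := by
          refine lintegral_congr fun ω => ?_
          simp only [Function.comp]
          congr 2
          funext i
          rw [show (i : ℕ) = 0 by lia]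
      _ = _ := by
          rw [h]
          refine lintegral_congr fun ω => ?_
          exact (lintegral_map (f := fun p => g (Z ω, p)) (hg.comp measurable_prodMk_left)
            (by fun_prop)).symm
  | succ k ih =>
    have h1 : Measurable fun x : (T × (Fin (k + 1) → S)) × S =>
        ((x.1.1, Fin.snoc x.1.2 x.2) : T × (Fin (k + 2) → S)) :=
      (measurable_fst.comp measurable_fst).prodMk ((measurable_snoc k).comp
        ((measurable_snd.comp measurable_fst).prodMk measurable_snd))
    have hlast : Measurable fun y : T × (Fin (k + 1) → S) => y.2 (Fin.last k) :=
      (measurable_pi_apply _).comp measurable_snd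
    have h2 : Measurable fun y : T × (Fin (k + 1) → S) =>
        ∫⁻ x, g (y.1, Fin.snoc y.2 x) ∂(κ (y.2 (Fin.last k))) :=
      Measurable.lintegral_kernel_prod_right (κ := κ.comap _ hlast) (hg.comp h1)
    have hZ2 : Measurable[past Sp (n + 1 + k)]
        fun ω => (Z ω, fun i : Fin (k + 1) => Sp (n + 1 + i) ω) := by
      refine Measurable.prodMk (hZ.mono (past_mono Sp (by lia)) le_rfl) ?_
      exact @measurable_pi_lambda _ _ _ (past Sp (n + 1 + k)) _ _
        fun i => measurable_past Sp (by lia)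
    have h3 := markov_one hM (n + 1 + k) hZ2 (hg.comp h1)
    have h4 := ih h2
    calc _ = ∫⁻ ω, (g ∘ fun x : (T × (Fin (k + 1) → S)) × S =>
        ((x.1.1, Fin.snoc x.1.2 x.2) : T × (Fin (k + 2) → S)))
          ((Z ω, fun i : Fin (k + 1) => Sp (n + 1 + i) ω), Sp (n + 1 + k + 1) ω) ∂Pr := by
          refine lintegral_congr fun ω => ?_
          simp only [Function.comp]
          congr 2
          funext i
          refine Fin.lastCases ?_ (fun j => ?_) i
          · simp only [Fin.snoc_last]; rfl
          · simp only [Fin.snoc_castSucc]; rfl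
      _ = _ := by
          rw [h3]
          refine Eq.trans h4 ?_
          refine lintegral_congr fun ω => ?_
          exact (lintegral_iterK_succ κ k _ (f := fun p => g (Z ω, p))
            (hg.comp measurable_prodMk_left)).symm

theorem markov_set [IsProbabilityMeasure Pr] [IsMarkovKernel κ] (hM : IsMarkovChain Pr κ Sp)
    (n : ℕ) {T : Type*} [MeasurableSpace T]
    {Z : Ω → T} (hZ : Measurable[past Sp n] Z) (k : ℕ) {E : Set (T × (Fin (k + 1) → S))}
    (hE : MeasurableSet E) :
    Pr {ω | (Z ω, fun i : Fin (k + 1) => Sp (n + 1 + i) ω) ∈ E} =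
      ∫⁻ ω, iterK κ k (Sp n ω) {p | (Z ω, p) ∈ E} ∂Pr := by
  have h := markov_block hM n hZ k (measurable_one.indicator hE)
  have hZ' : Measurable Z := hZ.mono (past_le hM n) le_rfl
  have hm : Measurable fun ω => (Z ω, fun i : Fin (k + 1) => Sp (n + 1 + i) ω) :=
    hZ'.prodMk (measurable_pi_lambda _ fun i => hM.1 _)
  calc _ = ∫⁻ ω, ((fun ω => (Z ω, fun i : Fin (k + 1) => Sp (n + 1 + i) ω)) ⁻¹' E).indicator 1 ω
        ∂Pr := (lintegral_indicator_one (hm hE)).symm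
    _ = _ := by
      refine Eq.trans h ?_
      refine lintegral_congr fun ω => ?_
      exact lintegral_indicator_one (measurable_prodMk_left hE)

theorem measurable_iterK_section [IsMarkovKernel κ] (hM : IsMarkovChain Pr κ Sp) (n : ℕ) {T : Type*}
    [MeasurableSpace T] {Z : Ω → T} (hZ : Measurable Z) (k : ℕ)
    {E : Set (T × (Fin (k + 1) → S))} (hE : MeasurableSet E) :
    Measurable fun ω => iterK κ k (Sp n ω) {p | (Z ω, p) ∈ E} :=
  Kernel.measurable_kernel_prodMk_left (κ := (iterKernel κ k).comap (Sp n) (hM.1 n))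
    (t := (Prod.map Z id) ⁻¹' E) ((hZ.prodMap measurable_id) hE)

end Markov

/-! ### Summability and almost sure convergence -/

/-- A bounded monotone sequence makes few jumps of height `δ` over blocks of length `j`. -/
theorem count_jumps {a : ℕ → ℝ≥0∞} (ha : Monotone a) {c : ℝ≥0∞} (hc : ∀ n, a n ≤ c)
    (hc' : c ≠ ⊤) (δ : ℝ≥0∞) (j : ℕ) :
    ∑' n, {n | a n + δ < a (n + j)}.indicator (fun _ => δ) n ≤ j * c := by
  have key : ∀ T, ∑ n ∈ Finset.range T, {n | a n + δ < a (n + j)}.indicator (fun _ => δ) n +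
      ∑ i ∈ Finset.range j, a i ≤ ∑ i ∈ Finset.range j, a (T + i) := by
    intro T
    induction T with
    | zero => simp
    | succ T ih =>
      have h1 : ∑ i ∈ Finset.range j, a (T + i) + a (T + j) =
          ∑ i ∈ Finset.range j, a (T + 1 + i) + a T := by
        rw [← Finset.sum_range_succ, Finset.sum_range_succ']
        simp [add_assoc, add_comm 1]
      have h2 : a T + {n | a n + δ < a (n + j)}.indicator (fun _ => δ) T ≤ a (T + j) := by
        by_cases h : T ∈ {n | a n + δ < a (n + j)}
        · rw [Set.indicator_of_mem h]; exact le_of_lt h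
        · rw [Set.indicator_of_notMem h, add_zero]; exact ha (by lia)
      have h3 : a T ≠ ⊤ := ne_top_of_le_ne_top hc' (hc T)
      rw [Finset.sum_range_succ]
      refine (ENNReal.add_le_add_iff_right h3).1 ?_
      rw [← h1]
      calc _ = (∑ n ∈ Finset.range T, {n | a n + δ < a (n + j)}.indicator (fun _ => δ) n +
            ∑ i ∈ Finset.range j, a i) +
            (a T + {n | a n + δ < a (n + j)}.indicator (fun _ => δ) T) := by ring
        _ ≤ _ := add_le_add ih h2
  refine ENNReal.tsum_le_of_sum_range_le fun T => ?_
  refine (le_self_add.trans (key T)).trans ?_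
  calc _ ≤ ∑ i ∈ Finset.range j, c := Finset.sum_le_sum fun i _ => hc _
    _ = _ := by simp

theorem volume_symmDiff_le_add (C A B : Set (Euc d)) :
    volume (symmDiff A C) ≤ volume (symmDiff B C) + volume (symmDiff A B) := by
  rw [add_comm]
  exact measure_symmDiff_le _ _ _

theorem antitone_distance (hop : IsSteinerOp op) (hstar : IsSphericalRearrangement star)
    {A : Set (Euc d)} (hA : MeasurableSet A) (hfin : volume A ≠ ⊤)
    (q : ℕ → Metric.sphere (0 : Euc d) 1) :
    Antitone fun n => volume (symmDiff (iter op A q n) (star A)) := by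
  obtain ⟨⟨R, hR⟩, -⟩ := hstar A hA hfin.lt_top
  rw [hR]
  exact antitone_nat_of_succ_le fun n => volume_symmDiff_op_ball_le hop _
    (measurableSet_iter hop hA q n) (by rwa [volume_iter hop hA]) R

/-- Reduction to compact sets: symmetrizations and the spherical rearrangement are `1`-Lipschitz
for the distance in measure. -/
theorem symmDiff_iter_star_le (hop : IsSteinerOp op) (hstar : IsSphericalRearrangement star)
    {X K : Set (Euc d)} (hX : MeasurableSet X) (hK : MeasurableSet K) (hX' : volume X ≠ ⊤)
    (hKX : K ⊆ X) (q : ℕ → Metric.sphere (0 : Euc d) 1) (n : ℕ) :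
    volume (symmDiff (iter op X q n) (star X)) ≤
      volume (X \ K) + volume (symmDiff (iter op K q n) (star K)) + volume (X \ K) := by
  have hK' : volume K ≠ ⊤ := ne_top_of_le_ne_top hX' (measure_mono hKX)
  refine (measure_symmDiff_le _ (iter op K q n) _).trans ?_
  rw [add_assoc]
  refine add_le_add ?_ ((measure_symmDiff_le _ (star K) _).trans (add_le_add le_rfl ?_))
  · refine (volume_symmDiff_iter_le hop hX hK hX' hK' q n).trans_eq ?_
    rw [symmDiff_of_ge hKX]
  · refine (volume_symmDiff_star_le hstar hK hX hK'.lt_top hX'.lt_top).trans ?_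
    rw [tsub_eq_zero_of_le (measure_mono hKX), zero_add,
      measure_sdiff hKX hK.nullMeasurableSet hK']

section Chain

variable {Ω : Type*} [MeasurableSpace Ω] {Pr : Measure Ω} [IsProbabilityMeasure Pr]
  {κ : Kernel (Metric.sphere (0 : Euc d) 1) (Metric.sphere (0 : Euc d) 1)} [IsMarkovKernel κ]
  {Sp : ℕ → Ω → Metric.sphere (0 : Euc d) 1}

/-- The summability estimate. Each time the chain is in `O` while the iterated symmetral is `ε`-far
from the ball, it gains `δ` in energy within `N + 1` steps with probability at least `δ`. As the
energy is bounded, the expected number of such times is finite. -/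
theorem finite_bad_times (hop : IsSteinerOp op) (hstar : IsSphericalRearrangement star)
    (hM : IsMarkovChain Pr κ Sp) {K : Set (Euc d)} {R : ℝ} (hK : MeasurableSet K)
    (hKR : K ⊆ Metric.ball 0 R) {ε : ℝ≥0∞} {N : ℕ} {δ : ℝ≥0∞} (hδ : 0 < δ)
    {O : Set (Metric.sphere (0 : Euc d) 1)} (hO : IsOpen O)
    (hgain : ∀ s ∈ O, ∀ A, Cls K R A → ε ≤ volume (symmDiff A (star K)) → ∃ n ≤ N,
        δ ≤ iterK κ n s {p | energy d A + δ < energy d (iter op A (ext p) n)}) :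
    ∀ᵐ ω ∂Pr, ∀ᶠ n in atTop, ¬ (Sp n ω ∈ O ∧
      ε ≤ volume (symmDiff (iter op K (fun i => Sp i ω) n) (star K))) := by
  have hKf : volume K ≠ ⊤ := ne_top_of_le_ne_top measure_ball_lt_top.ne (measure_mono hKR)
  have hstf : volume (star K) ≠ ⊤ := by rw [(hstar K hK hKf.lt_top).2]; exact hKf
  have hcls : ∀ q n, Cls K R (iter op K q n) := fun q n =>
    iter_induction (Cls K R) (fun v A h => h.op_mem hop v) ⟨hK, hKR, rfl, fun _ => le_rfl⟩ q n
  let Z : ℕ → Ω → ℕ → Metric.sphere (0 : Euc d) 1 := fun n ω i => Sp (min i n) ω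
  have hZ : ∀ n, Measurable[past Sp n] (Z n) := fun n =>
    @measurable_pi_lambda _ _ _ (past Sp n) _ _ fun i => measurable_past Sp (min_le_right i n)
  have hZX : ∀ n ω, iter op K (Z n ω) n = iter op K (fun i => Sp i ω) n := fun n ω =>
    iter_congr K n fun i hi => by simp only [Z, min_eq_left hi]
  let D : ℕ → Set (ℕ → Metric.sphere (0 : Euc d) 1) := fun n =>
    {q | q n ∈ O ∧ ε ≤ volume (symmDiff (iter op K q n) (star K))}
  have hDm : ∀ n, MeasurableSet (D n) := fun n => by
    refine (hO.measurableSet.preimage (measurable_pi_apply n)).inter ?_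
    refine (isClosed_le continuous_const (continuous_iter hop hK hKf n
      (fun A => volume (symmDiff A (star K)))
      (volume_symmDiff_le_add (star K)) fun q => ?_)).measurableSet
    refine ne_top_of_le_ne_top ?_ (measure_mono Set.symmDiff_subset_union)
    exact (measure_union_lt_top (by rw [volume_iter hop hK]; exact hKf.lt_top)
      hstf.lt_top).ne
  have hec : ∀ n, Continuous fun q => energy d (iter op K q n) := continuous_energy_iter hop hK hKf
  let E : (n k : ℕ) →
      Set ((ℕ → Metric.sphere (0 : Euc d) 1) × (Fin (k + 1) → Metric.sphere (0 : Euc d) 1)) :=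
    fun n k => {x | x.1 ∈ D n ∧ energy d (iter op K x.1 n) + δ <
      energy d (iter op (iter op K x.1 n) (ext x.2) k)}
  -- The sequence of directions obtained by concatenating `x.1 0, …, x.1 n` and `x.2`.
  let r : (n k : ℕ) → ((ℕ → Metric.sphere (0 : Euc d) 1) ×
      (Fin (k + 1) → Metric.sphere (0 : Euc d) 1)) → ℕ → Metric.sphere (0 : Euc d) 1 :=
    fun n k x i => if i ≤ n then x.1 i else ext x.2 (i - (n + 1))
  have hr : ∀ n k, Continuous (r n k) := fun n k => continuous_pi fun i => by
    by_cases hi : i ≤ n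
    · simp only [r, hi, if_true]
      exact (continuous_apply i).comp continuous_fst
    · simp only [r, hi, if_false]
      exact ((continuous_apply _).comp continuous_ext).comp continuous_snd
  have hri : ∀ n k x, iter op (iter op K x.1 n) (ext x.2) k = iter op K (r n k x) (n + 1 + k) :=
    fun n k x => by
    rw [← iter_add, iter_congr K (q := r n k x) (q' := x.1) n (fun i hi => by simp [r, hi])]
    refine iter_congr _ k fun i _ => ?_
    simp only [r, show ¬ (n + 1 + i ≤ n) by lia, if_false, Nat.add_sub_cancel_left]
  have hEm : ∀ n k, MeasurableSet (E n k) := fun n k => by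
    have h : MeasurableSet {x : (ℕ → Metric.sphere (0 : Euc d) 1) ×
        (Fin (k + 1) → Metric.sphere (0 : Euc d) 1) | energy d (iter op K x.1 n) + δ <
          energy d (iter op (iter op K x.1 n) (ext x.2) k)} := by
      simp_rw [hri]
      exact measurableSet_lt (((hec n).comp continuous_fst).measurable.add_const δ)
        ((hec _).comp (hr n k)).measurable
    exact ((hDm n).preimage measurable_fst).inter h
  have hZm : ∀ n, Measurable (Z n) := fun n => (hZ n).mono (past_le hM n) le_rfl
  -- On the event `E n k` the energy jumps by more than `δ` within the `k + 1` steps after `n`.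
  have hEJ : ∀ n k ω, (Z n ω, fun i : Fin (k + 1) => Sp (n + 1 + i) ω) ∈ E n k →
      energy d (iter op K (fun i => Sp i ω) n) + δ <
        energy d (iter op K (fun i => Sp i ω) (n + (k + 1))) := by
    intro n k ω h
    have h2 := h.2
    simp only [hZX] at h2
    refine h2.trans_eq ?_
    rw [show n + (k + 1) = n + 1 + k by lia, ← iter_add]
    congr 1
    exact iter_congr _ k fun i hi => ext_apply (fun i => Sp (n + 1 + i) ω) hi
  have hEv : ∀ n k, MeasurableSet {ω | (Z n ω, fun i : Fin (k + 1) => Sp (n + 1 + i) ω) ∈ E n k} :=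
    fun n k => ((hZm n).prodMk (measurable_pi_lambda _ fun i => hM.1 _)) (hEm n k)
  have hsumk : ∀ k : ℕ, ∑' n, δ * Pr {ω | (Z n ω, fun i : Fin (k + 1) => Sp (n + 1 + i) ω) ∈ E n k}
      ≤ (k + 1 : ℕ) * volume K := by
    intro k
    calc _ = ∑' n, ∫⁻ ω, {ω | (Z n ω, fun i : Fin (k + 1) => Sp (n + 1 + i) ω) ∈ E n k}.indicator
          (fun _ => δ) ω ∂Pr :=
          tsum_congr fun n => (lintegral_indicator_const (hEv n k) δ).symm
      _ = ∫⁻ ω, (∑' n, {ω | (Z n ω, fun i : Fin (k + 1) => Sp (n + 1 + i) ω) ∈ E n k}.indicator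
          (fun _ => δ) ω) ∂Pr :=
          (lintegral_tsum fun n => (measurable_const.indicator (hEv n k)).aemeasurable).symm
      _ ≤ ∫⁻ _, ((k + 1 : ℕ) * volume K) ∂Pr := by
          refine lintegral_mono fun ω => ?_
          refine le_trans ?_ (count_jumps (energy_iter_mono hop hK hKf fun i => Sp i ω)
            (c := volume K) (fun n => (energy_le _).trans (volume_iter hop hK _ n).le) hKf δ (k + 1))
          refine ENNReal.tsum_le_tsum fun n => ?_
          by_cases h : ω ∈ {ω | (Z n ω, fun i : Fin (k + 1) => Sp (n + 1 + i) ω) ∈ E n k}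
          · rw [Set.indicator_of_mem h, Set.indicator_of_mem]
            exact hEJ n k ω h
          · rw [Set.indicator_of_notMem h]
            exact zero_le
      _ = _ := by simp
  have hD : ∀ n, δ * Pr {ω | Z n ω ∈ D n} ≤ ∑ k ∈ Finset.range (N + 1),
      Pr {ω | (Z n ω, fun i : Fin (k + 1) => Sp (n + 1 + i) ω) ∈ E n k} := by
    intro n
    simp_rw [fun k => markov_set hM n (hZ n) k (hEm n k)]
    rw [← lintegral_finsetSum _ fun k _ => measurable_iterK_section hM n (hZm n) k (hEm n k),
      ← lintegral_indicator_const (s := {ω | Z n ω ∈ D n}) (hZm n (hDm n))]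
    refine lintegral_mono fun ω => ?_
    by_cases h : ω ∈ {ω | Z n ω ∈ D n}
    · rw [Set.indicator_of_mem h]
      have hs : Sp n ω ∈ O := by
        have : Z n ω n ∈ O := h.1
        simpa only [Z, min_self] using this
      obtain ⟨k, hk, hk'⟩ := hgain _ hs _ (hcls (Z n ω) n) h.2
      have e : {p | (Z n ω, p) ∈ E n k} = {p | energy d (iter op K (Z n ω) n) + δ <
          energy d (iter op (iter op K (Z n ω) n) (ext p) k)} := by
        ext p
        exact and_iff_right h
      rw [← e] at hk'
      exact hk'.trans (Finset.single_le_sum (f := fun k => iterK κ k (Sp n ω)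
        {p | (Z n ω, p) ∈ E n k}) (fun _ _ => zero_le) (Finset.mem_range.2 (by lia)))
    · rw [Set.indicator_of_notMem h]
      exact zero_le
  have htot : ∑' n, Pr {ω | Z n ω ∈ D n} ≠ ⊤ := by
    have h1 : δ * (δ * ∑' n, Pr {ω | Z n ω ∈ D n}) ≤
        ∑ k ∈ Finset.range (N + 1), (k + 1 : ℕ) * volume K := by
      calc _ ≤ δ * ∑' n, ∑ k ∈ Finset.range (N + 1),
            Pr {ω | (Z n ω, fun i : Fin (k + 1) => Sp (n + 1 + i) ω) ∈ E n k} := by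
            rw [← ENNReal.tsum_mul_left]
            exact mul_le_mul_right (ENNReal.tsum_le_tsum hD) _
        _ = ∑ k ∈ Finset.range (N + 1), ∑' n, δ *
            Pr {ω | (Z n ω, fun i : Fin (k + 1) => Sp (n + 1 + i) ω) ∈ E n k} := by
            rw [Summable.tsum_finsetSum fun _ _ => ENNReal.summable, Finset.mul_sum]
            simp_rw [ENNReal.tsum_mul_left]
        _ ≤ _ := Finset.sum_le_sum fun k _ => hsumk k
    intro htop
    rw [htop, ENNReal.mul_top hδ.ne', ENNReal.mul_top hδ.ne', top_le_iff] at h1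
    exact ENNReal.sum_ne_top.2 (fun k _ => ENNReal.mul_ne_top (ENNReal.natCast_ne_top _) hKf) h1
  filter_upwards [ae_eventually_notMem htot] with ω hω
  filter_upwards [hω] with n hn hn'
  refine hn ⟨?_, ?_⟩
  · simpa only [Z, min_self] using hn'.1
  · rw [hZX]; exact hn'.2

theorem tendsto_compact (hop : IsSteinerOp op) (hstar : IsSphericalRearrangement star)
    (hM : IsMarkovChain Pr κ Sp) (ℓ : Metric.sphere (0 : Euc d) 1)
    (hrec : ∀ O : Set (Metric.sphere (0 : Euc d) 1), IsOpen O → ℓ ∈ O →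
      ∀ᵐ ω ∂Pr, ∀ m : ℕ, ∃ n ≥ m, Sp n ω ∈ O)
    (hcont : ∀ (n : ℕ) (O : Set (Fin (n + 1) → Metric.sphere (0 : Euc d) 1)), IsOpen O →
      LowerSemicontinuousAt (fun s => iterK κ n s O) ℓ)
    (hdiscr : ∀ X : Set (Euc d), MeasurableSet X → volume X < ⊤ →
      0 < volume (symmDiff X (star X)) →
      0 < ∑' n : ℕ, iterK κ n ℓ
        {p : Fin (n + 1) → Metric.sphere (0 : Euc d) 1 |
          0 < volume (symmDiff X (op (p (Fin.last n)) X))})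
    {K : Set (Euc d)} (hK : IsCompact K) :
    ∀ᵐ ω ∂Pr, Tendsto (fun n => volume (symmDiff (iter op K (fun i => Sp i ω) n) (star K)))
      atTop (𝓝 0) := by
  have hKm := hK.measurableSet
  have hKf : volume K ≠ ⊤ := hK.measure_lt_top.ne
  rcases eq_or_ne (volume K) 0 with h0 | h0
  · refine Eventually.of_forall fun ω => ?_
    have : ∀ n, volume (symmDiff (iter op K (fun i => Sp i ω) n) (star K)) = 0 := fun n =>
      measure_mono_null Set.symmDiff_subset_union (measure_union_null
        ((volume_iter hop hKm _ n).trans h0) ((hstar K hKm hKf.lt_top).2.trans h0))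
    simp only [this]
    exact tendsto_const_nhds
  obtain ⟨R, hR⟩ := hK.isBounded.subset_ball 0
  have hclose : ∀ ε : ℝ≥0∞, 0 < ε → ∀ᵐ ω ∂Pr, ∀ᶠ n in atTop,
      volume (symmDiff (iter op K (fun i => Sp i ω) n) (star K)) ≤ ε := by
    intro ε hε
    obtain ⟨N, δ, hδ, -, O, hO, hℓ, hgain⟩ :=
      uniform_gain hop hstar κ ℓ hcont hdiscr (R := R) hK (pos_iff_ne_zero.2 h0) hε
    filter_upwards [hrec O hO hℓ, finite_bad_times hop hstar hM hKm hR hδ hO hgain]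
      with ω h1 h2
    obtain ⟨m, hm⟩ := eventually_atTop.1 h2
    obtain ⟨n, hn, hnO⟩ := h1 m
    have h3 := hm n hn
    rw [not_and, not_le] at h3
    filter_upwards [eventually_ge_atTop n] with n' hn'
    exact (antitone_distance hop hstar hKm hKf _ hn').trans (h3 hnO).le
  have hall := ae_all_iff.2 fun j : ℕ => hclose (j + 1 : ℝ≥0∞)⁻¹ (by simp)
  filter_upwards [hall] with ω hω
  rw [ENNReal.tendsto_nhds_zero]
  intro ε hε
  obtain ⟨j, hj⟩ := ENNReal.exists_inv_nat_lt hε.ne'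
  filter_upwards [hω j] with n hn
  refine hn.trans (le_trans ?_ hj.le)
  rw [ENNReal.inv_le_inv]
  exact le_self_add

end Chain

end Steiner

/-- Convergence of time-homogeneous Markov processes of Steiner
symmetrizations under recurrence, continuity and discrimination assumptions. -/
theorem statement1 {d : ℕ} (hd : 1 ≤ d)
    (op : Metric.sphere (0 : Euc d) 1 → Set (Euc d) → Set (Euc d)) (hop : IsSteinerOp op)
    (star : Set (Euc d) → Set (Euc d)) (hstar : IsSphericalRearrangement star)
    {Ω : Type*} [MeasurableSpace Ω] (Pr : Measure Ω) [IsProbabilityMeasure Pr]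
    (κ : Kernel (Metric.sphere (0 : Euc d) 1) (Metric.sphere (0 : Euc d) 1))
    [IsMarkovKernel κ]
    (Sp : ℕ → Ω → Metric.sphere (0 : Euc d) 1)
    (hMarkov : IsMarkovChain Pr κ Sp)
    (ℓ : Metric.sphere (0 : Euc d) 1)
    (hrec : ∀ O : Set (Metric.sphere (0 : Euc d) 1), IsOpen O → ℓ ∈ O →
      ∀ᵐ ω ∂Pr, ∀ m : ℕ, ∃ n ≥ m, Sp n ω ∈ O)
    (hcont : ∀ (n : ℕ) (O : Set (Fin (n + 1) → Metric.sphere (0 : Euc d) 1)), IsOpen O →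
      LowerSemicontinuousAt (fun s => iterK κ n s O) ℓ)
    (hdiscr : ∀ X : Set (Euc d), MeasurableSet X → volume X < ⊤ →
      0 < volume (symmDiff X (star X)) →
      0 < ∑' n : ℕ, iterK κ n ℓ
        {p : Fin (n + 1) → Metric.sphere (0 : Euc d) 1 |
          0 < volume (symmDiff X (op (p (Fin.last n)) X))}) :
    ∀ X : Set (Euc d), MeasurableSet X → volume X < ⊤ →
      ∀ᵐ ω ∂Pr, Tendsto (fun n => volume (symmDiff (iterOp op X Sp n ω) (star X)))
        atTop (nhds 0) := by
  intro X hX hX'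
  have hinv : ∀ j : ℕ, (j + 1 : ENNReal)⁻¹ ≠ 0 := fun j => by simp
  choose K hKX hK hKlt using fun j : ℕ => hX.exists_isCompact_sdiff_lt hX'.ne (hinv j)
  have hall := ae_all_iff.2 fun j : ℕ => Steiner.tendsto_compact hop hstar hMarkov ℓ hrec hcont
    hdiscr (hK j)
  filter_upwards [hall] with ω hω
  rw [ENNReal.tendsto_nhds_zero]
  intro ε hε
  have h3 : (0 : ENNReal) < ε / 3 := ENNReal.div_pos hε.ne' (by simp)
  obtain ⟨j, hj⟩ := ENNReal.exists_inv_nat_lt h3.ne'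
  have hj' : volume (X \ K j) ≤ ε / 3 := by
    refine (hKlt j).le.trans (le_trans ?_ hj.le)
    rw [ENNReal.inv_le_inv]
    exact le_self_add
  filter_upwards [ENNReal.tendsto_nhds_zero.1 (hω j) _ h3] with n hn
  rw [Steiner.iterOp_eq]
  refine (Steiner.symmDiff_iter_star_le hop hstar hX (hK j).measurableSet hX'.ne (hKX j)
    _ n).trans ?_
  calc _ ≤ ε / 3 + ε / 3 + ε / 3 := by gcongr
    _ = ε := ENNReal.add_thirds ε
end
end

section
/- The family of Steiner symmetrizations, parametrized by ℝP^{d-1}, acting on the metric space ℳ(ℝ^d) of equivalence classes of Borel subsets of ℝ^d of finite Lebesgue measure with metric d₁(A,B) = m(A Δ B), is a ⋆-compatible symmetrization space; for every X ∈ ℳ(ℝ^d) the orbit X^𝒮 = {X^{u_1…u_n} : n ≥ 1, u_i ∈ ℝP^{d-1}} has compact closure in (ℳ(ℝ^d), d₁); and the function J(X) = ∫_X |x|²/(1+|x|²) dx is a ⋆-compatible strict asymmetry function on this symmetrization space. -/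
/-!
Every claim about Steiner symmetrization along a unit vector `v` reduces, by Fubini in the coordinates
`p = x + t v` with `x ⟂ v`, to a claim about sections on the line. There the symmetrization replaces
a set by the centered interval of the same length, and centered intervals are totally ordered by
inclusion. This gives uniqueness of the symmetrization (hence idempotence and invariance of centered
balls), monotonicity, and nonexpansiveness (`IsSteinerSymmOf.symmDiff_le`).

The integrand of `J` is a strictly increasing function of `|p|`, so on each line the centered
interval is a sublevel set of it, and in the whole space so is the centered ball. The bathtub
principle with its equality case (`bathtub`) therefore yields strictness of `J` along
symmetrizations and its `⋆`-compatibility; continuity holds because the integrand is at most `1`.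

Continuity in the direction: a rotation taking `s` to `t` conjugates the two symmetrizations, and
rotations close to the identity move a set of finite measure only slightly
(`steiner_continuous_dir`). Joint continuity follows from nonexpansiveness.

Fixed sets are balls: let `B` be the centered ball with the measure of `A`. If they differ, `A \ B`
and `B \ A` have equal positive measure, so some translation by `z` takes a non-null part of `A \ B`
into `B \ A`. If `A` is fixed by the symmetrization along `z`, some line parallel to `z` meets the
symmetrization of `A` and `B` in two centered intervals neither of which contains the other
(`eq_ball_of_fixed`).

Orbits are totally bounded: by the one-dimensional Brunn–Minkowski inequality, the
`δ`-neighbourhood of a symmetrization lies in the symmetrization of the `δ`-neighbourhood. Hence for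
`X` compact, the `δ`-neighbourhoods of all its iterates exceed them in measure by the same small
amount at most, and each iterate is close to the union of those balls of a fixed finite cover that it
meets (`orbit_totallyBounded`). General `X` are approximated from inside by compact sets. Since the
metric `m(A Δ B)` is complete, with limits given by upper limits of rapidly converging sequences
(`exists_limit`), every sequence in an orbit has a convergent subsequence (`exists_subseq`).
-/

open MeasureTheory ProbabilityTheory Filter Topology RealInnerProductSpace

noncomputable section

/-- Membership in the orbit `X^𝒮` of `X` under successive symmetrizations. -/
def InOrbit {P : Type*} {α : Type*} (op : P → α → α) (X Y : α) : Prop :=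
  ∃ l : List P, l ≠ [] ∧ Y = l.foldl (fun B s => op s B) X

/-- The asymmetry functional `J(X) = ∫_X |x|²/(1+|x|²) dx`. -/
def asymmetryJ {d : ℕ} (A : Set (Euc d)) : ℝ :=
  ∫ x in A, ‖x‖ ^ 2 / (1 + ‖x‖ ^ 2)

/-! ### Centered intervals -/

/-- The section of `A` along the line `x + ℝ v`, as a set of parameters. -/
def sec {d : ℕ} (v : Euc d) (A : Set (Euc d)) (x : Euc d) : Set ℝ := {t : ℝ | x + t • v ∈ A}

/-- Centered open intervals, including `∅` and the whole line. -/
def IsCI (S : Set ℝ) : Prop := S = Set.univ ∨ ∃ a : ℝ, S = Set.Ioo (-a) a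

lemma IsCI.measurableSet {S : Set ℝ} (h : IsCI S) : MeasurableSet S := by
  rcases h with rfl | ⟨a, rfl⟩
  · exact MeasurableSet.univ
  · exact measurableSet_Ioo

/-- Centered intervals are totally ordered by inclusion; this drives all comparisons below. -/
lemma IsCI.total {S T : Set ℝ} (hS : IsCI S) (hT : IsCI T) : S ⊆ T ∨ T ⊆ S := by
  rcases hS with rfl | ⟨a, rfl⟩
  · right; exact Set.subset_univ _
  rcases hT with rfl | ⟨b, rfl⟩
  · left; exact Set.subset_univ _
  rcases le_total a b with h | h
  · left; exact Set.Ioo_subset_Ioo (by linarith) h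
  · right; exact Set.Ioo_subset_Ioo (by linarith) h

lemma IsCI.subset_of_le {S T : Set ℝ} (hS : IsCI S) (hT : IsCI T)
    (h : volume S ≤ volume T) : S ⊆ T := by
  rcases hT with rfl | ⟨b, rfl⟩
  · exact Set.subset_univ _
  rcases hS with rfl | ⟨a, rfl⟩
  · simp at h
  · rw [Real.volume_Ioo, Real.volume_Ioo] at h
    intro t ht
    have ha : 0 < a := by linarith [ht.1, ht.2]
    have := (ENNReal.ofReal_le_ofReal_iff' ).1 h
    have hab : a ≤ b := by rcases this with h | h <;> linarith
    exact ⟨by linarith [ht.1], by linarith [ht.2]⟩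

lemma IsCI.eq_of_volume {S T : Set ℝ} (hS : IsCI S) (hT : IsCI T)
    (h : volume S = volume T) : S = T :=
  (hS.subset_of_le hT h.le).antisymm (hT.subset_of_le hS h.ge)

/-- Passing to centered intervals of the same length does not increase the measure of the
symmetric difference. -/
lemma IsCI.symmDiff_le {S T A B : Set ℝ} (hS : IsCI S) (hT : IsCI T)
    (hA : volume S = volume A) (hB : volume T = volume B) :
    volume (symmDiff S T) ≤ volume (symmDiff A B) := by
  have key : ∀ S T A B : Set ℝ, IsCI S → IsCI T → volume S = volume A → volume T = volume B →
      S ⊆ T → volume (symmDiff S T) ≤ volume (symmDiff A B) := by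
    intro S T A B hS hT hA hB hST
    rw [symmDiff_of_le hST]
    by_cases hfin : volume S = ⊤
    · have hSu : S = Set.univ := by
        rcases hS with rfl | ⟨a, rfl⟩
        · rfl
        · simp at hfin
      subst hSu
      simp
    · calc volume (T \ S) = volume T - volume S :=
            measure_sdiff hST hS.measurableSet.nullMeasurableSet hfin
        _ = volume B - volume A := by rw [hA, hB]
        _ ≤ volume (B \ A) := le_measure_sdiff
        _ ≤ volume (symmDiff A B) := measure_mono Set.subset_union_right
  rcases hS.total hT with h | h
  · exact key S T A B hS hT hA hB h
  · rw [symmDiff_comm, symmDiff_comm A]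
    exact key T S B A hT hS hB hA h

/-! ### Sections, Fubini, and Steiner symmetrization -/

section Steiner

variable {d : ℕ} {v : Euc d}

lemma perp_part (hv : ‖v‖ = 1) (p : Euc d) : ⟪p - ⟪p, v⟫ • v, v⟫ = 0 := by
  rw [inner_sub_left, inner_smul_left]
  simp [hv]

/-- Every point lies on a line parallel to `v` through a point orthogonal to `v`. -/
lemma exists_coord (hv : ‖v‖ = 1) (p : Euc d) :
    ∃ (x : Euc d) (t : ℝ), ⟪x, v⟫ = 0 ∧ p = x + t • v :=
  ⟨p - ⟪p, v⟫ • v, ⟪p, v⟫, perp_part hv p, by simp⟩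

lemma measurableSet_sec {A : Set (Euc d)} (hA : MeasurableSet A) (x : Euc d) :
    MeasurableSet (sec v A x) := by
  have : Measurable (fun t : ℝ => x + t • v) := by fun_prop
  exact this hA

lemma IsSteinerSymmOf.isCI {X Y : Set (Euc d)} (h : IsSteinerSymmOf v X Y) {x : Euc d}
    (hx : ⟪x, v⟫ = 0) : IsCI (sec v Y x) := (h.2 x hx).1

lemma IsSteinerSymmOf.vol {X Y : Set (Euc d)} (h : IsSteinerSymmOf v X Y) {x : Euc d}
    (hx : ⟪x, v⟫ = 0) : volume (sec v Y x) = volume (sec v X x) := (h.2 x hx).2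

lemma subset_of_sec (hv : ‖v‖ = 1) {A B : Set (Euc d)}
    (h : ∀ x : Euc d, ⟪x, v⟫ = 0 → sec v A x ⊆ sec v B x) : A ⊆ B := by
  intro p hp
  obtain ⟨x, t, hx, rfl⟩ := exists_coord hv p
  exact h x hx hp

lemma IsSteinerSymmOf.mono (hv : ‖v‖ = 1) {X Y X' Y' : Set (Euc d)}
    (h : IsSteinerSymmOf v X Y) (h' : IsSteinerSymmOf v X' Y')
    (hle : ∀ x : Euc d, ⟪x, v⟫ = 0 → volume (sec v X x) ≤ volume (sec v X' x)) : Y ⊆ Y' :=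
  subset_of_sec hv fun x hx =>
    (h.isCI hx).subset_of_le (h'.isCI hx) (by rw [h.vol hx, h'.vol hx]; exact hle x hx)

lemma IsSteinerSymmOf.mono_set (hv : ‖v‖ = 1) {X Y X' Y' : Set (Euc d)}
    (h : IsSteinerSymmOf v X Y) (h' : IsSteinerSymmOf v X' Y') (hX : X ⊆ X') : Y ⊆ Y' :=
  h.mono hv h' fun _ _ => measure_mono fun _ ht => hX ht

/-- The Steiner symmetrization is determined by the lengths of the sections. -/
lemma IsSteinerSymmOf.unique (hv : ‖v‖ = 1) {X Y X' Y' : Set (Euc d)}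
    (h : IsSteinerSymmOf v X Y) (h' : IsSteinerSymmOf v X' Y')
    (he : ∀ x : Euc d, ⟪x, v⟫ = 0 → volume (sec v X x) = volume (sec v X' x)) : Y = Y' :=
  (h.mono hv h' fun x hx => (he x hx).le).antisymm (h'.mono hv h fun x hx => (he x hx).ge)

lemma IsSteinerSymmOf.of_isCI {X : Set (Euc d)} (hX : MeasurableSet X)
    (h : ∀ x : Euc d, ⟪x, v⟫ = 0 → IsCI (sec v X x)) : IsSteinerSymmOf v X X :=
  ⟨hX, fun x hx => ⟨h x hx, rfl⟩⟩

/-- A Steiner symmetrization is its own symmetrization, whence idempotence. -/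
lemma IsSteinerSymmOf.self {X Y : Set (Euc d)}
    (h : IsSteinerSymmOf v X Y) : IsSteinerSymmOf v Y Y :=
  IsSteinerSymmOf.of_isCI h.1 fun _ hx => h.isCI hx

/-- Orthogonal coordinates adapted to a unit vector preserve Lebesgue measure. -/
lemma measurePreserving_coord (hv : ‖v‖ = 1) :
    MeasurePreserving (fun p : (ℝ ∙ v)ᗮ × ℝ => (p.1 : Euc d) + p.2 • v)
      (volume.prod volume) volume := by
  let e := LinearIsometryEquiv.toSpanUnitSingleton (𝕜 := ℝ) v hv
  have h1 : MeasurePreserving (Prod.swap : (ℝ ∙ v)ᗮ × ℝ → ℝ × (ℝ ∙ v)ᗮ)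
    (volume.prod volume) (volume.prod volume) := Measure.measurePreserving_swap
  have h2 : MeasurePreserving (Prod.map e (id : (ℝ ∙ v)ᗮ → (ℝ ∙ v)ᗮ))
    (volume.prod volume) (volume.prod volume) :=
    e.measurePreserving.prod (MeasurePreserving.id _)
  have h3 := WithLp.volume_preserving_toLp (ℝ ∙ v) (ℝ ∙ v)ᗮ
  have h4 := (ℝ ∙ v).orthogonalDecomposition.symm.measurePreserving
  have := h4.comp (h3.comp (h2.comp h1))
  convert! this using 1
  ext1 p
  simp [e]
  rw [add_comm]

lemma lintegral_coord (hv : ‖v‖ = 1) {f : Euc d → ENNReal} (hf : Measurable f) :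
    ∫⁻ p, f p = ∫⁻ y : (ℝ ∙ v)ᗮ, ∫⁻ t : ℝ, f ((y : Euc d) + t • v) := by
  rw [← (measurePreserving_coord hv).lintegral_comp hf]
  exact lintegral_prod (fun p : (ℝ ∙ v)ᗮ × ℝ => f ((p.1 : Euc d) + p.2 • v))
    (hf.comp (measurePreserving_coord hv).measurable).aemeasurable

lemma setLIntegral_coord (hv : ‖v‖ = 1) {f : Euc d → ENNReal} (hf : Measurable f)
    {A : Set (Euc d)} (hA : MeasurableSet A) :
    ∫⁻ p in A, f p =
      ∫⁻ y : (ℝ ∙ v)ᗮ, ∫⁻ t in sec v A (y : Euc d), f ((y : Euc d) + t • v) := by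
  rw [← lintegral_indicator hA, lintegral_coord hv (hf.indicator hA)]
  congr 1
  ext1 y
  rw [← lintegral_indicator (measurableSet_sec hA _)]
  rfl

lemma volume_coord (hv : ‖v‖ = 1) {A : Set (Euc d)} (hA : MeasurableSet A) :
    volume A = ∫⁻ y : (ℝ ∙ v)ᗮ, volume (sec v A (y : Euc d)) := by
  have := setLIntegral_coord hv (f := fun _ => 1) measurable_const hA
  simpa using this

lemma measurable_lintegral_sec (hv : ‖v‖ = 1) {f : Euc d → ENNReal} (hf : Measurable f)
    {A : Set (Euc d)} (hA : MeasurableSet A) :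
    Measurable fun y : (ℝ ∙ v)ᗮ =>
      ∫⁻ t in sec v A (y : Euc d), f ((y : Euc d) + t • v) := by
  have := ((hf.indicator hA).comp (measurePreserving_coord hv).measurable).lintegral_prod_right'
    (ν := (volume : Measure ℝ))
  convert! this using 1
  ext1 y
  rw [← lintegral_indicator (measurableSet_sec hA _)]
  rfl

lemma coord_perp (y : (ℝ ∙ v)ᗮ) : ⟪(y : Euc d), v⟫ = 0 := by
  have := (Submodule.mem_orthogonal_singleton_iff_inner_left (𝕜 := ℝ)).1 y.2
  exact this

lemma IsSteinerSymmOf.volume_eq (hv : ‖v‖ = 1) {X Y : Set (Euc d)} (hX : MeasurableSet X)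
    (h : IsSteinerSymmOf v X Y) : volume Y = volume X := by
  rw [volume_coord hv h.1, volume_coord hv hX]
  congr 1
  ext1 y
  exact h.vol (coord_perp y)

/-- Nonexpansiveness, by integrating the comparison of sections over the orthogonal hyperplane. -/
lemma IsSteinerSymmOf.symmDiff_le (hv : ‖v‖ = 1) {X Y X' Y' : Set (Euc d)}
    (hX : MeasurableSet X) (hX' : MeasurableSet X')
    (h : IsSteinerSymmOf v X Y) (h' : IsSteinerSymmOf v X' Y') :
    volume (symmDiff Y Y') ≤ volume (symmDiff X X') := by
  rw [volume_coord hv (h.1.symmDiff h'.1), volume_coord hv (hX.symmDiff hX')]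
  refine lintegral_mono fun y => ?_
  exact (h.isCI (coord_perp y)).symmDiff_le (h'.isCI (coord_perp y))
    (h.vol (coord_perp y)) (h'.vol (coord_perp y))

end Steiner

/-! ### The bathtub principle and the asymmetry -/

/-- Bathtub principle: among sets of given measure, a strict sublevel set minimizes the integral,
and it is the only minimizer up to null sets. -/
lemma bathtub {α : Type*} [MeasurableSpace α] {μ : Measure α} {I A : Set α}
    (hI : MeasurableSet I) (hA : MeasurableSet A) (hfin : μ I ≠ ⊤) (hμ : μ I = μ A)
    {f : α → ENNReal} (hf : Measurable f) {c : ENNReal} (hc : c ≠ ⊤)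
    (hlt : ∀ x ∈ I, f x < c) (hge : ∀ x, x ∉ I → c ≤ f x) :
    ∫⁻ x in I, f x ∂μ ≤ ∫⁻ x in A, f x ∂μ ∧
      (∫⁻ x in A, f x ∂μ ≤ ∫⁻ x in I, f x ∂μ → μ (symmDiff I A) = 0) := by
  have e1 := lintegral_inter_add_sdiff (μ := μ) f I hA
  have e2 := lintegral_inter_add_sdiff (μ := μ) f A hI
  have m1 : μ (I \ A) = μ (A \ I) := by
    have a1 := measure_inter_add_sdiff (μ := μ) I hA
    have a2 := measure_inter_add_sdiff (μ := μ) A hI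
    rw [Set.inter_comm A I] at a2
    have hne : μ (I ∩ A) ≠ ⊤ := ne_top_of_le_ne_top hfin (measure_mono Set.inter_subset_left)
    exact (ENNReal.add_right_inj hne).1 (a1.trans (hμ.trans a2.symm))
  have hfd : μ (I \ A) ≠ ⊤ := ne_top_of_le_ne_top hfin (measure_mono Set.sdiff_subset)
  have l1 : ∫⁻ x in I \ A, f x ∂μ ≤ c * μ (I \ A) := by
    rw [← setLIntegral_const]
    exact setLIntegral_mono measurable_const fun x hx => (hlt x hx.1).le
  have l2 : c * μ (A \ I) ≤ ∫⁻ x in A \ I, f x ∂μ := by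
    rw [← setLIntegral_const]
    exact setLIntegral_mono hf fun x hx => hge x hx.2
  rw [Set.inter_comm A I] at e2
  have h12 : ∫⁻ x in I \ A, f x ∂μ ≤ ∫⁻ x in A \ I, f x ∂μ := l1.trans (m1 ▸ l2)
  refine ⟨?_, fun heq => ?_⟩
  · rw [← e1, ← e2]
    gcongr
  · have hne : ∫⁻ x in I ∩ A, f x ∂μ ≠ ⊤ := by
      have : ∫⁻ x in I ∩ A, f x ∂μ ≤ c * μ (I ∩ A) := by
        rw [← setLIntegral_const]
        exact setLIntegral_mono measurable_const fun x hx => (hlt x hx.1).le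
      refine ne_top_of_le_ne_top ?_ this
      exact ENNReal.mul_ne_top hc (ne_top_of_le_ne_top hfin (measure_mono Set.inter_subset_left))
    rw [← e1, ← e2, ENNReal.add_le_add_iff_left hne] at heq
    have z : μ (I \ A) = 0 := by
      by_contra hz
      have : ∫⁻ x in I \ A, f x ∂μ < ∫⁻ x in I \ A, c ∂μ := by
        refine setLIntegral_strict_mono (hI.diff hA) hz measurable_const ?_
          (Filter.Eventually.of_forall fun x hx => hlt x hx.1)
        exact ne_top_of_le_ne_top (ENNReal.mul_ne_top hc hfd) l1
      rw [setLIntegral_const, m1] at this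
      exact absurd (this.trans_le (l2.trans heq)) (lt_irrefl _)
    rw [Set.symmDiff_def, measure_union_null_iff]
    exact ⟨z, m1 ▸ z⟩

/-- The increasing profile `r ↦ r² / (1 + r²)`. -/
def prof (r : ℝ) : ℝ := r ^ 2 / (1 + r ^ 2)

lemma prof_nonneg (r : ℝ) : 0 ≤ prof r := by unfold prof; positivity

lemma prof_le_one (r : ℝ) : prof r ≤ 1 := by
  unfold prof
  rw [div_le_one (by positivity)]
  linarith

lemma prof_lt {r s : ℝ} (h : r ^ 2 < s ^ 2) : prof r < prof s := by
  unfold prof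
  rw [div_lt_div_iff₀ (by positivity) (by positivity)]
  nlinarith

lemma prof_le {r s : ℝ} (h : r ^ 2 ≤ s ^ 2) : prof r ≤ prof s := by
  unfold prof
  rw [div_le_div_iff₀ (by positivity) (by positivity)]
  nlinarith

/-- The integrand of `asymmetryJ` with values in `[0, ∞]`. -/
def eprof {d : ℕ} (p : Euc d) : ENNReal := ENNReal.ofReal (prof ‖p‖)

lemma measurable_prof_norm {d : ℕ} : Measurable fun p : Euc d => prof ‖p‖ := by
  unfold prof; fun_prop

lemma measurable_eprof {d : ℕ} : Measurable (eprof (d := d)) :=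
  measurable_prof_norm.ennreal_ofReal

lemma eprof_le_one {d : ℕ} (p : Euc d) : eprof p ≤ 1 :=
  ENNReal.ofReal_le_one.2 (prof_le_one _)

lemma eprof_lt {d : ℕ} {p : Euc d} {c : ℝ} (h : ‖p‖ ^ 2 < c ^ 2) :
    eprof p < ENNReal.ofReal (prof c) := by
  refine (ENNReal.ofReal_lt_ofReal_iff ?_).2 (prof_lt h)
  exact (prof_nonneg _).trans_lt (prof_lt h)

lemma le_eprof {d : ℕ} {p : Euc d} {c : ℝ} (h : c ^ 2 ≤ ‖p‖ ^ 2) :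
    ENNReal.ofReal (prof c) ≤ eprof p := ENNReal.ofReal_le_ofReal (prof_le h)

lemma setLIntegral_eprof_ne_top {d : ℕ} {A : Set (Euc d)} (hA : volume A < ⊤) :
    ∫⁻ p in A, eprof p ≠ ⊤ := by
  refine ne_top_of_le_ne_top hA.ne ?_
  calc ∫⁻ p in A, eprof p ≤ ∫⁻ _ in A, 1 := lintegral_mono fun p => eprof_le_one p
    _ = volume A := by simp

lemma asymmetryJ_eq {d : ℕ} (A : Set (Euc d)) :
    asymmetryJ A = (∫⁻ p in A, eprof p).toReal := by
  unfold asymmetryJ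
  rw [integral_eq_lintegral_of_nonneg_ae]
  · rfl
  · exact Filter.Eventually.of_forall fun p => prof_nonneg _
  · exact measurable_prof_norm.aestronglyMeasurable

lemma asymmetryJ_le_iff {d : ℕ} {A B : Set (Euc d)} (hA : volume A < ⊤) (hB : volume B < ⊤) :
    asymmetryJ A ≤ asymmetryJ B ↔ ∫⁻ p in A, eprof p ≤ ∫⁻ p in B, eprof p := by
  rw [asymmetryJ_eq, asymmetryJ_eq,
    ENNReal.toReal_le_toReal (setLIntegral_eprof_ne_top hA) (setLIntegral_eprof_ne_top hB)]

lemma asymmetryJ_le_add {d : ℕ} {A B : Set (Euc d)} (hA : volume A < ⊤) (hB : volume B < ⊤) :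
    asymmetryJ A ≤ asymmetryJ B + (volume (symmDiff A B)).toReal := by
  have hAB : volume (symmDiff A B) ≠ ⊤ :=
    ne_top_of_le_ne_top (measure_union_lt_top hA hB).ne
      (measure_mono symmDiff_le_sup)
  rw [asymmetryJ_eq, asymmetryJ_eq, ← ENNReal.toReal_add (setLIntegral_eprof_ne_top hB) hAB]
  refine ENNReal.toReal_mono (ENNReal.add_ne_top.2 ⟨setLIntegral_eprof_ne_top hB, hAB⟩) ?_
  calc ∫⁻ p in A, eprof p ≤ ∫⁻ p in B ∪ symmDiff A B, eprof p := by
        refine lintegral_mono_set fun x hx => ?_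
        by_cases hxB : x ∈ B
        · exact Or.inl hxB
        · exact Or.inr (Or.inl ⟨hx, hxB⟩)
    _ ≤ (∫⁻ p in B, eprof p) + ∫⁻ p in symmDiff A B, eprof p := lintegral_union_le _ _ _
    _ ≤ (∫⁻ p in B, eprof p) + volume (symmDiff A B) := by
        gcongr
        calc ∫⁻ p in symmDiff A B, eprof p ≤ ∫⁻ _ in symmDiff A B, 1 :=
              lintegral_mono fun p => eprof_le_one p
          _ = volume (symmDiff A B) := by simp

/-- The integrand of `asymmetryJ` lies in `[0, 1]`, so `asymmetryJ` is `1`-Lipschitz for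
`m(A Δ B)`. -/
lemma asymmetryJ_dist_le {d : ℕ} {A B : Set (Euc d)} (hA : volume A < ⊤) (hB : volume B < ⊤) :
    |asymmetryJ A - asymmetryJ B| ≤ (volume (symmDiff A B)).toReal := by
  have h1 := asymmetryJ_le_add hA hB
  have h2 := asymmetryJ_le_add hB hA
  rw [symmDiff_comm] at h2
  rw [abs_le]
  constructor <;> linarith

lemma norm_sq_coord {d : ℕ} {v x : Euc d} (hv : ‖v‖ = 1) (hx : ⟪x, v⟫ = 0) (t : ℝ) :
    ‖x + t • v‖ ^ 2 = ‖x‖ ^ 2 + t ^ 2 := by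
  rw [norm_add_sq_real, inner_smul_right, hx, norm_smul, hv]
  simp

/-- One-dimensional comparison of the asymmetry on a line: the centered interval minimizes. -/
lemma bathtub_line {d : ℕ} {v x : Euc d} (hv : ‖v‖ = 1) (hx : ⟪x, v⟫ = 0) {I A : Set ℝ}
    (hI : IsCI I) (hA : MeasurableSet A) (hfin : volume I ≠ ⊤) (hμ : volume I = volume A) :
    ∫⁻ t in I, eprof (x + t • v) ≤ ∫⁻ t in A, eprof (x + t • v) ∧
      (∫⁻ t in A, eprof (x + t • v) ≤ ∫⁻ t in I, eprof (x + t • v) →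
        volume (symmDiff I A) = 0) := by
  have hm : Measurable fun t : ℝ => eprof (x + t • v) :=
    measurable_eprof.comp (by fun_prop)
  rcases hI with rfl | ⟨a, rfl⟩
  · simp at hfin
  rcases le_or_gt a 0 with ha | ha
  · have : Set.Ioo (-a) a = ∅ := Set.Ioo_eq_empty (by linarith)
    rw [this] at hfin hμ ⊢
    -- every function is at least `0` off the empty sublevel set
    exact bathtub MeasurableSet.empty hA hfin hμ hm (c := 0) (by simp) (by simp) (by simp)
  · have hc : √(‖x‖ ^ 2 + a ^ 2) ^ 2 = ‖x‖ ^ 2 + a ^ 2 := Real.sq_sqrt (by positivity)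
    -- the threshold is the value of the integrand at the endpoints `x ± a v` of the interval
    refine bathtub measurableSet_Ioo hA hfin hμ hm
      (c := ENNReal.ofReal (prof √(‖x‖ ^ 2 + a ^ 2))) (by simp) ?_ ?_
    · intro t ht
      refine eprof_lt ?_
      rw [norm_sq_coord hv hx, hc]
      have := sq_lt_sq' ht.1 ht.2
      linarith
    · intro t ht
      refine le_eprof ?_
      rw [norm_sq_coord hv hx, hc]
      have : a ^ 2 ≤ t ^ 2 := by
        by_contra hlt
        exact ht (by rw [Set.mem_Ioo, ← abs_lt]; exact abs_lt_of_sq_lt_sq (not_le.1 hlt) ha.le)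
      linarith

/-- Symmetrization decreases the asymmetry, by comparison on each line. In the equality case the
comparison is an equality on almost every line, where uniqueness in the bathtub principle applies. -/
lemma asymmetryJ_steiner {d : ℕ} {v : Euc d} (hv : ‖v‖ = 1) {X Y : Set (Euc d)}
    (hX : MeasurableSet X) (hXf : volume X < ⊤) (h : IsSteinerSymmOf v X Y) :
    asymmetryJ Y ≤ asymmetryJ X ∧
      (asymmetryJ Y = asymmetryJ X → volume (symmDiff Y X) = 0) := by
  have hYf : volume Y < ⊤ := by rw [h.volume_eq hv hX]; exact hXf
  have hfin : ∀ᵐ y : (ℝ ∙ v)ᗮ, volume (sec v Y (y : Euc d)) < ⊤ := by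
    refine ae_lt_top ?_ ?_
    · simpa using measurable_lintegral_sec hv (f := fun _ => 1) measurable_const h.1
    · rw [← volume_coord hv h.1]; exact hYf.ne
  have key : ∀ᵐ y : (ℝ ∙ v)ᗮ,
      ∫⁻ t in sec v Y (y : Euc d), eprof ((y : Euc d) + t • v) ≤
        ∫⁻ t in sec v X (y : Euc d), eprof ((y : Euc d) + t • v) := by
    filter_upwards [hfin] with y hy
    exact (bathtub_line hv (coord_perp y) (h.isCI (coord_perp y)) (measurableSet_sec hX _) hy.ne
      (h.vol (coord_perp y))).1
  refine ⟨?_, fun heq => ?_⟩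
  · rw [asymmetryJ_le_iff hYf hXf, setLIntegral_coord hv measurable_eprof h.1,
      setLIntegral_coord hv measurable_eprof hX]
    exact lintegral_mono_ae key
  · have hle := (asymmetryJ_le_iff hXf hYf).1 heq.ge
    have hne := setLIntegral_eprof_ne_top hYf
    rw [setLIntegral_coord hv measurable_eprof h.1] at hle hne
    rw [setLIntegral_coord hv measurable_eprof hX] at hle
    have hae := ae_eq_of_ae_le_of_lintegral_le key hne
      (measurable_lintegral_sec hv measurable_eprof hX).aemeasurable hle
    rw [volume_coord hv (h.1.symmDiff hX)]
    refine lintegral_eq_zero_of_ae_eq_zero ?_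
    filter_upwards [hfin, hae] with y hy hy2
    exact (bathtub_line hv (coord_perp y) (h.isCI (coord_perp y)) (measurableSet_sec hX _) hy.ne
      (h.vol (coord_perp y))).2 hy2.ge

/-- The centered ball is the only minimizer of the asymmetry among sets of its measure. -/
lemma asymmetryJ_ball {d : ℕ} {A : Set (Euc d)} {R : ℝ}
    (hA : MeasurableSet A) (hAf : volume A < ⊤) (hR : volume (Metric.ball (0 : Euc d) R) = volume A)
    (hle : asymmetryJ A ≤ asymmetryJ (Metric.ball (0 : Euc d) R)) :
    volume (symmDiff A (Metric.ball (0 : Euc d) R)) = 0 := by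
  have hBf : volume (Metric.ball (0 : Euc d) R) < ⊤ := by rw [hR]; exact hAf
  have hle' := (asymmetryJ_le_iff hAf hBf).1 hle
  rw [symmDiff_comm]
  rcases le_or_gt R 0 with h0 | h0
  · rw [Metric.ball_eq_empty.2 h0] at hBf hR hle' ⊢
    exact (bathtub MeasurableSet.empty hA hBf.ne hR measurable_eprof (c := 0)
      (by simp) (by simp) (by simp)).2 hle'
  · refine (bathtub measurableSet_ball hA hBf.ne hR measurable_eprof
      (c := ENNReal.ofReal (prof R)) (by simp) ?_ ?_).2 hle'
    · intro p hp
      rw [mem_ball_zero_iff] at hp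
      exact eprof_lt (by have := norm_nonneg p; nlinarith)
    · intro p hp
      rw [mem_ball_zero_iff, not_lt] at hp
      exact le_eprof (by nlinarith)

/-! ### Centered balls and sets fixed by all symmetrizations -/

lemma isCI_sec_ball {d : ℕ} {v x : Euc d} (hv : ‖v‖ = 1) (hx : ⟪x, v⟫ = 0) (R : ℝ) :
    IsCI (sec v (Metric.ball (0 : Euc d) R) x) := by
  rcases le_or_gt R 0 with h0 | h0
  · refine Or.inr ⟨0, ?_⟩
    rw [Metric.ball_eq_empty.2 h0]
    simp [sec]
  · refine Or.inr ⟨√(R ^ 2 - ‖x‖ ^ 2), ?_⟩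
    ext t
    rw [Set.mem_Ioo, ← Real.sq_lt]
    change x + t • v ∈ Metric.ball (0 : Euc d) R ↔ _
    rw [mem_ball_zero_iff, ← sq_lt_sq₀ (norm_nonneg _) h0.le, norm_sq_coord hv hx]
    constructor <;> intro h <;> linarith

lemma steiner_ball {d : ℕ} {v : Euc d} (hv : ‖v‖ = 1) (R : ℝ) :
    IsSteinerSymmOf v (Metric.ball (0 : Euc d) R) (Metric.ball (0 : Euc d) R) :=
  IsSteinerSymmOf.of_isCI measurableSet_ball fun _ hx => isCI_sec_ball hv hx R

/-- Centered balls of equal measure may have different radii (nonpositive ones, or in dimension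
zero), but being nested they agree up to a null set. -/
lemma ball_symmDiff_null {d : ℕ} {R S : ℝ}
    (h : volume (Metric.ball (0 : Euc d) R) = volume (Metric.ball (0 : Euc d) S)) :
    volume (symmDiff (Metric.ball (0 : Euc d) R) (Metric.ball (0 : Euc d) S)) = 0 := by
  have key : ∀ R S : ℝ, R ≤ S →
      volume (Metric.ball (0 : Euc d) R) = volume (Metric.ball (0 : Euc d) S) →
      volume (symmDiff (Metric.ball (0 : Euc d) R) (Metric.ball (0 : Euc d) S)) = 0 := by
    intro R S hRS h
    rw [symmDiff_of_le (Metric.ball_subset_ball hRS),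
      measure_sdiff (Metric.ball_subset_ball hRS) measurableSet_ball.nullMeasurableSet
        measure_ball_lt_top.ne, h, tsub_self]
  rcases le_total R S with h1 | h1
  · exact key R S h1 h
  · rw [symmDiff_comm]; exact key S R h1 h.symm

/-- Two sets of positive measure can be translated so as to meet in positive measure. -/
lemma exists_translate {d : ℕ} {S T : Set (Euc d)} (hS : MeasurableSet S) (hT : MeasurableSet T)
    (hS0 : volume S ≠ 0) (hT0 : volume T ≠ 0) :
    ∃ z : Euc d, volume (S ∩ {p | p + z ∈ T}) ≠ 0 := by
  by_contra hcon
  push Not at hcon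
  -- by Fubini the measures of the intersections integrate to `volume S * volume T` over `z`
  have hmp := measurePreserving_prod_add (volume : Measure (Euc d)) (volume : Measure (Euc d))
  have h1 := hmp.measure_preimage (hS.prod hT).nullMeasurableSet
  rw [Measure.prod_prod] at h1
  have hm : MeasurableSet ((fun z : Euc d × Euc d => (z.1, z.1 + z.2)) ⁻¹' (S ×ˢ T)) :=
    hmp.measurable (hS.prod hT)
  have h2 : (volume.prod volume : Measure (Euc d × Euc d))
      ((fun z : Euc d × Euc d => (z.1, z.1 + z.2)) ⁻¹' (S ×ˢ T)) = 0 := by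
    rw [Measure.prod_apply_symm hm]
    refine lintegral_eq_zero_of_ae_eq_zero (Filter.Eventually.of_forall fun z => ?_)
    exact hcon z
  rw [h2] at h1
  exact (mul_ne_zero hS0 hT0) h1.symm

/-- A set with the measure of a ball that is not moved by any Steiner symmetrization is that ball:
otherwise a translate of `A \ B` would meet `B \ A`, and the symmetrization along the direction of
translation would have a section not comparable with the section of `B`. -/
lemma eq_ball_of_fixed {d : ℕ} {A : Set (Euc d)} {R : ℝ} (hA : MeasurableSet A)
    (hAf : volume A < ⊤) (hR : volume (Metric.ball (0 : Euc d) R) = volume A)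
    (hfix : ∀ v : Euc d, ‖v‖ = 1 → ∃ Y, IsSteinerSymmOf v A Y ∧ volume (symmDiff Y A) = 0) :
    volume (symmDiff A (Metric.ball (0 : Euc d) R)) = 0 := by
  set B := Metric.ball (0 : Euc d) R with hBdef
  have hB : MeasurableSet B := measurableSet_ball
  have m1 : volume (A \ B) = volume (B \ A) := by
    have a1 := measure_inter_add_sdiff (μ := volume) A hB
    have a2 := measure_inter_add_sdiff (μ := volume) B hA
    rw [Set.inter_comm B A] at a2
    have hne : volume (A ∩ B) ≠ ⊤ := ne_top_of_le_ne_top hAf.ne (measure_mono Set.inter_subset_left)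
    exact (ENNReal.add_right_inj hne).1 (a1.trans (hR.symm.trans a2.symm))
  by_contra hcon
  have hS0 : volume (A \ B) ≠ 0 := by
    intro h0
    apply hcon
    rw [Set.symmDiff_def, measure_union_null_iff]
    exact ⟨h0, m1 ▸ h0⟩
  obtain ⟨z, hz⟩ := exists_translate (hA.diff hB) (hB.diff hA) hS0 (m1 ▸ hS0)
  have hz0 : z ≠ 0 := by
    rintro rfl
    apply hz
    convert! measure_empty (μ := volume) using 2
    ext p
    simp only [add_zero, Set.mem_inter_iff, Set.mem_sdiff, Set.mem_ofPred_eq,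
      Set.mem_empty_iff_false]
    tauto
  have hzn : ‖z‖ ≠ 0 := norm_ne_zero_iff.2 hz0
  set v : Euc d := ‖z‖⁻¹ • z with hvdef
  have hv : ‖v‖ = 1 := by rw [hvdef, norm_smul, norm_inv, norm_norm, inv_mul_cancel₀ hzn]
  have hzv : z = ‖z‖ • v := by rw [hvdef, smul_smul, mul_inv_cancel₀ hzn, one_smul]
  obtain ⟨Y, hY, hYA⟩ := hfix v hv
  -- `A` and `Y` differ on a null set, so `p` can be chosen with neither `p` nor `p + z` in it
  have hnull : volume (symmDiff Y A ∪ (fun p => p + z) ⁻¹' (symmDiff Y A)) = 0 := by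
    rw [measure_union_null_iff, measure_preimage_add_right]
    exact ⟨hYA, hYA⟩
  have hpos : volume (((A \ B) ∩ {p | p + z ∈ B \ A}) \
      (symmDiff Y A ∪ (fun p => p + z) ⁻¹' (symmDiff Y A))) ≠ 0 := by
    rw [measure_sdiff_null hnull]
    exact hz
  obtain ⟨p, ⟨⟨hpA, hpB⟩, hpzB, hpzA⟩, hpN⟩ := nonempty_of_measure_ne_zero hpos
  have hpY : p ∈ Y := by
    by_contra h
    exact hpN (Or.inl (Or.inr ⟨hpA, h⟩))
  have hpzY : p + z ∉ Y := by
    intro h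
    exact hpN (Or.inr (Or.inl ⟨h, hpzA⟩))
  obtain ⟨x, t, hx, rfl⟩ := exists_coord hv p
  have e : x + t • v + z = x + (t + ‖z‖) • v := by rw [add_smul, ← hzv, add_assoc]
  rw [e] at hpzB hpzY
  rcases (hY.isCI hx).total (isCI_sec_ball hv hx R) with h | h
  · exact hpB (h hpY)
  · exact hpzY (h hpzB)

/-! ### Continuity in the direction -/

/-- Steiner symmetrization commutes with linear isometries. -/
lemma IsSteinerSymmOf.preimage {d : ℕ} {s t : Euc d} (U : Euc d ≃ₗᵢ[ℝ] Euc d) (hU : U s = t)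
    {A C : Set (Euc d)} (h : IsSteinerSymmOf t A C) :
    IsSteinerSymmOf s (U ⁻¹' A) (U ⁻¹' C) := by
  refine ⟨U.continuous.measurable h.1, fun x hx => ?_⟩
  have hx' : ⟪U x, t⟫ = 0 := by rw [← hU, U.inner_map_map]; exact hx
  have := h.2 (U x) hx'
  simpa [hU] using this

/-- A rotation taking the unit vector `s` to the unit vector `t`, as a product of reflections in
the lines spanned by `s` and by `s + t`. -/
def rot {d : ℕ} (s t : Euc d) : Euc d ≃ₗᵢ[ℝ] Euc d :=
  (ℝ ∙ s).reflection.trans (ℝ ∙ (s + t)).reflection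

lemma rot_apply {d : ℕ} (s t x : Euc d) :
    rot s t x = (2 : ℝ) • (⟪s + t, (ℝ ∙ s).reflection x⟫ / ‖s + t‖ ^ 2) • (s + t)
      - (ℝ ∙ s).reflection x := by
  have := Submodule.reflection_singleton_apply (𝕜 := ℝ) (s + t) ((ℝ ∙ s).reflection x)
  rw [two_smul] at *
  simpa [rot] using this

lemma rot_self {d : ℕ} (s t : Euc d) (hs : ‖s‖ = 1) (ht : ‖t‖ = 1) (hst : s + t ≠ 0) :
    rot s t s = t := by
  rw [rot_apply, Submodule.reflection_mem_subspace_eq_self (Submodule.mem_span_singleton_self s)]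
  have h0 : ‖s + t‖ ^ 2 ≠ 0 := by positivity
  have h1 : ‖s + t‖ ^ 2 = 2 * ⟪s + t, s⟫ := by
    rw [norm_add_sq_real, inner_add_left, real_inner_self_eq_norm_sq, hs, ht, real_inner_comm]
    ring
  have h2 : (2 : ℝ) * (⟪s + t, s⟫ / ‖s + t‖ ^ 2) = 1 := by
    rw [h1] at h0 ⊢
    rw [mul_div_assoc', div_self h0]
  rw [smul_smul, h2, one_smul, add_sub_cancel_left]

lemma rot_id {d : ℕ} (s x : Euc d) : rot s s x = x := by
  have : (ℝ ∙ (s + s)) = (ℝ ∙ s) := by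
    rw [← two_smul ℝ s]
    exact Submodule.span_singleton_smul_eq (IsUnit.mk0 _ two_ne_zero) s
  simp [rot, this]

/-- Rotations that move `s` only slightly move a set of finite measure only slightly. -/
lemma tendsto_rot {d : ℕ} {s : Euc d} (hs : ‖s‖ = 1) {A : Set (Euc d)} (hA : MeasurableSet A)
    (hAf : volume A < ⊤) {ε : ENNReal} (hε : 0 < ε) :
    ∃ δ : ℝ, 0 < δ ∧ ∀ t : Euc d, dist s t < δ → s + t ≠ 0 ∧
      volume (symmDiff (rot s t ⁻¹' A) A) < ε := by
  have hss : s + s ≠ 0 := by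
    rw [← two_smul ℝ s]
    exact smul_ne_zero two_ne_zero (norm_ne_zero_iff.1 (by rw [hs]; exact one_ne_zero))
  let F : C({t : Euc d // s + t ≠ 0} × Euc d, Euc d) :=
    ⟨fun q => rot s q.1 q.2, by
      simp only [rot_apply]
      have : ∀ q : {t : Euc d // s + t ≠ 0} × Euc d, ‖s + (q.1 : Euc d)‖ ^ 2 ≠ 0 := by
        intro q
        have := q.1.2
        positivity
      have h1 : Continuous fun q : {t : Euc d // s + t ≠ 0} × Euc d => s + (q.1 : Euc d) := by
        fun_prop
      have h2 : Continuous fun q : {t : Euc d // s + t ≠ 0} × Euc d =>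
          (ℝ ∙ s).reflection q.2 :=
        (ℝ ∙ s).reflection.continuous.comp continuous_snd
      have h3 := (h1.inner h2 (𝕜 := ℝ)).div (h1.norm.pow 2) this
      exact ((h3.smul h1).const_smul (2 : ℝ)).sub h2⟩
  have hF : Tendsto F.curry (𝓝 ⟨s, hss⟩) (𝓝 (F.curry ⟨s, hss⟩)) := F.curry.continuous.tendsto _
  have hmp : ∀ a, MeasurePreserving (F.curry a) volume volume := fun a =>
    (rot s (a : Euc d)).measurePreserving
  have h := tendsto_measure_symmDiff_preimage_nhds_zero (μ := volume) (ν := volume) hF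
    (Filter.Eventually.of_forall hmp) (hmp _) hA.nullMeasurableSet hAf.ne
  have h' := h.eventually (gt_mem_nhds hε)
  rw [Metric.eventually_nhds_iff] at h'
  obtain ⟨δ, hδ, H⟩ := h'
  refine ⟨min δ 1, by positivity, fun t ht => ?_⟩
  have hst : s + t ≠ 0 := by
    intro h0
    have : t = -s := by rw [eq_neg_iff_add_eq_zero, add_comm]; exact h0
    rw [this, dist_eq_norm, sub_neg_eq_add, ← two_smul ℝ s, norm_smul, hs] at ht
    have := ht.trans_le (min_le_right _ _)
    norm_num at this
  refine ⟨hst, ?_⟩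
  have := H (y := ⟨t, hst⟩) (by
    rw [dist_comm]
    exact ht.trans_le (min_le_left _ _))
  have e : (F.curry ⟨s, hss⟩ ⁻¹' A) = A := by
    ext x
    change rot s s x ∈ A ↔ _
    rw [rot_id]
  rw [e] at this
  exact this

/-- Continuity of the symmetrization in the direction, for a fixed set. The rotation `U` taking `s`
to `t` turns the symmetrization `C` along `t` of `A` into the one along `s` of `U ⁻¹' A`, which is
close to the one of `A`; and `U` moves `D` only slightly. -/
lemma steiner_continuous_dir {d : ℕ} {s : Euc d} (hs : ‖s‖ = 1) {A D : Set (Euc d)}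
    (hA : MeasurableSet A) (hAf : volume A < ⊤) (hD : IsSteinerSymmOf s A D)
    {ε : ENNReal} (hε : 0 < ε) :
    ∃ δ : ℝ, 0 < δ ∧ ∀ (t : Euc d) (C : Set (Euc d)), ‖t‖ = 1 → dist s t < δ →
      IsSteinerSymmOf t A C → volume (symmDiff D C) < ε := by
  have hDf : volume D < ⊤ := by rw [hD.volume_eq hs hA]; exact hAf
  have hε2 : 0 < ε / 2 := ENNReal.half_pos hε.ne'
  obtain ⟨δ₁, hδ₁, H₁⟩ := tendsto_rot hs hA hAf hε2
  obtain ⟨δ₂, hδ₂, H₂⟩ := tendsto_rot hs hD.1 hDf hε2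
  refine ⟨min δ₁ δ₂, lt_min hδ₁ hδ₂, fun t C ht hst hC => ?_⟩
  obtain ⟨hne, h₁⟩ := H₁ t (hst.trans_le (min_le_left _ _))
  obtain ⟨-, h₂⟩ := H₂ t (hst.trans_le (min_le_right _ _))
  have hU := rot_self s t hs ht hne
  set U := rot s t
  have hC' := hC.preimage U hU
  have hUA : MeasurableSet (U ⁻¹' A) := U.continuous.measurable hA
  calc volume (symmDiff D C) = volume (U ⁻¹' (symmDiff D C)) :=
        (U.measurePreserving.measure_preimage (hD.1.symmDiff hC.1).nullMeasurableSet).symm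
    _ = volume (symmDiff (U ⁻¹' D) (U ⁻¹' C)) := by rw [Set.preimage_symmDiff]
    _ ≤ volume (symmDiff (U ⁻¹' D) D) + volume (symmDiff D (U ⁻¹' C)) :=
        measure_symmDiff_le _ _ _
    _ ≤ volume (symmDiff (U ⁻¹' D) D) + volume (symmDiff A (U ⁻¹' A)) :=
        add_le_add le_rfl (hD.symmDiff_le hs hA hUA hC')
    _ < ε / 2 + ε / 2 := by
        rw [symmDiff_comm A]
        exact ENNReal.add_lt_add h₂ h₁
    _ = ε := ENNReal.add_halves ε

/-! ### Neighbourhoods of symmetrizations -/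

/-- One-dimensional Brunn–Minkowski inequality with an interval: enlarging a nonempty bounded set
by `c` on both sides adds at least `2 c` to its length. -/
lemma volume_enlarge {S T : Set ℝ} (hne : S.Nonempty) (hbb : BddBelow S) (hba : BddAbove S)
    {c : ℝ} (hT : ∀ s ∈ S, ∀ t, |t - s| < c → t ∈ T) (hST : S ⊆ T) :
    volume S + ENNReal.ofReal (2 * c) ≤ volume T := by
  rcases le_or_gt c 0 with hc | hc
  · rw [ENNReal.ofReal_of_nonpos (by linarith), add_zero]
    exact measure_mono hST
  set a := sInf S
  set b := sSup S
  have ha : ∀ s ∈ S, a ≤ s := fun s hs => csInf_le hbb hs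
  have hb : ∀ s ∈ S, s ≤ b := fun s hs => le_csSup hba hs
  have h1 : Set.Ioo (a - c) a ⊆ T := by
    intro t ht
    obtain ⟨s, hs, hst⟩ := exists_lt_of_csInf_lt hne (show sInf S < t + c by linarith [ht.1])
    refine hT s hs t ?_
    rw [abs_lt]
    have := ha s hs
    constructor <;> linarith [ht.2]
  have h2 : Set.Ioo b (b + c) ⊆ T := by
    intro t ht
    obtain ⟨s, hs, hst⟩ := exists_lt_of_lt_csSup hne (show t - c < sSup S by linarith [ht.2])
    refine hT s hs t ?_
    rw [abs_lt]
    have := hb s hs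
    constructor <;> linarith [ht.1]
  have hd1 : Disjoint (S ∪ Set.Ioo (a - c) a) (Set.Ioo b (b + c)) := by
    rw [Set.disjoint_left]
    obtain ⟨s, hs⟩ := hne
    rintro t (ht | ht) ht'
    · linarith [hb t ht, ht'.1]
    · linarith [ht.2, ht'.1, ha s hs, hb s hs]
  have hd2 : Disjoint S (Set.Ioo (a - c) a) := by
    rw [Set.disjoint_left]
    intro t ht ht'
    linarith [ha t ht, ht'.2]
  calc volume S + ENNReal.ofReal (2 * c)
      = volume S + volume (Set.Ioo (a - c) a) + volume (Set.Ioo b (b + c)) := by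
        have e1 : volume (Set.Ioo (a - c) a) = ENNReal.ofReal c := by
          rw [Real.volume_Ioo]
          congr 1
          ring
        have e2 : volume (Set.Ioo b (b + c)) = ENNReal.ofReal c := by
          rw [Real.volume_Ioo]
          congr 1
          ring
        rw [e1, e2, add_assoc, ← ENNReal.ofReal_add hc.le hc.le, two_mul]
    _ = volume (S ∪ Set.Ioo (a - c) a ∪ Set.Ioo b (b + c)) := by
        rw [measure_union hd1 measurableSet_Ioo, measure_union hd2 measurableSet_Ioo]
    _ ≤ volume T := measure_mono (Set.union_subset (Set.union_subset hST h1) h2)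

/-- Steiner symmetrization does not enlarge neighbourhoods: the `ε`-neighbourhood of the
symmetrization is contained in the symmetrization of the `ε`-neighbourhood. -/
lemma IsSteinerSymmOf.thickening_subset {d : ℕ} {v : Euc d} (hv : ‖v‖ = 1)
    {X Y X' Y' : Set (Euc d)} (h : IsSteinerSymmOf v X Y) (h' : IsSteinerSymmOf v X' Y')
    {R ε : ℝ} (hR : X ⊆ Metric.ball 0 R) (hX' : Metric.thickening ε X ⊆ X') :
    Metric.thickening ε Y ⊆ Y' := by
  intro q hq
  obtain ⟨p, hp, hpq⟩ := Metric.mem_thickening_iff.1 hq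
  obtain ⟨x', t', hx', rfl⟩ := exists_coord hv q
  obtain ⟨x, t, hx, rfl⟩ := exists_coord hv p
  have hε : 0 < ε := dist_nonneg.trans_lt hpq
  have hperp : ⟪x' - x, v⟫ = 0 := by rw [inner_sub_left, hx, hx', sub_zero]
  have hdist : ∀ τ s : ℝ, dist (x' + τ • v) (x + s • v) < ε ↔
      (τ - s) ^ 2 < ε ^ 2 - ‖x' - x‖ ^ 2 := by
    intro τ s
    have e : x' + τ • v - (x + s • v) = (x' - x) + (τ - s) • v := by rw [sub_smul]; abel
    rw [dist_eq_norm, e, ← sq_lt_sq₀ (norm_nonneg _) hε.le, norm_sq_coord hv hperp]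
    constructor <;> intro h <;> linarith
  set c := √(ε ^ 2 - ‖x' - x‖ ^ 2) with hc
  have hdist' : ∀ τ s : ℝ, dist (x' + τ • v) (x + s • v) < ε ↔ |τ - s| < c := by
    intro τ s
    rw [hdist, Real.sq_lt, abs_lt]
  have htt : |t' - t| < c := (hdist' _ _).1 hpq
  have hc0 : 0 < c := (abs_nonneg _).trans_lt htt
  have hne : (sec v X x).Nonempty := by
    -- an empty section of `X` gives an empty section of `Y`, which contains `t`
    by_contra hemp
    rw [Set.not_nonempty_iff_eq_empty] at hemp
    have hvol := h.vol hx
    rw [hemp, measure_empty] at hvol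
    have : sec v Y x = Set.Ioo (-0) 0 :=
      (h.isCI hx).eq_of_volume (Or.inr ⟨0, rfl⟩) (by rw [hvol]; simp)
    have ht : t ∈ sec v Y x := hp
    rw [this] at ht
    simp at ht
  have hbd : ∀ s ∈ sec v X x, |s| ≤ R := by
    intro s hs
    have h1 : x + s • v ∈ Metric.ball (0 : Euc d) R := hR hs
    rw [mem_ball_zero_iff] at h1
    have h2 := norm_sq_coord hv hx s
    have h3 : 0 ≤ R := (norm_nonneg _).trans h1.le
    refine abs_le_of_sq_le_sq ?_ h3
    nlinarith [norm_nonneg (x + s • v), sq_nonneg ‖x‖]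
  have hS : ∀ s ∈ sec v X x, ∀ τ, |τ - s| < c → τ ∈ sec v X' x' := by
    intro s hs τ hτ
    refine hX' (Metric.mem_thickening_iff.2 ⟨x + s • v, hs, (hdist' _ _).2 hτ⟩)
  have hvol := volume_enlarge hne ⟨-R, fun s hs => (abs_le.1 (hbd s hs)).1⟩
    ⟨R, fun s hs => (abs_le.1 (hbd s hs)).2⟩ hS
    (fun s hs => hS s hs s (by simpa using hc0))
  rw [← h.vol hx, ← h'.vol hx'] at hvol
  have ht : t ∈ sec v Y x := hp
  change t' ∈ sec v Y' x'
  rcases h.isCI hx with hu | ⟨a, ha⟩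
  · refine (IsCI.subset_of_le (S := Set.univ) (Or.inl rfl) (h'.isCI hx') ?_) (Set.mem_univ _)
    rw [← hu]
    exact le_self_add.trans hvol
  · rw [ha] at ht hvol
    have hsub : Set.Ioo (-(a + c)) (a + c) ⊆ sec v Y' x' := by
      refine IsCI.subset_of_le (Or.inr ⟨_, rfl⟩) (h'.isCI hx') (le_trans (le_of_eq ?_) hvol)
      have ha0 : 0 < a := by linarith [ht.1, ht.2]
      rw [Real.volume_Ioo, Real.volume_Ioo, ← ENNReal.ofReal_add (by linarith) (by linarith)]
      congr 1
      ring
    refine hsub ?_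
    rw [abs_lt] at htt
    constructor <;> linarith [htt.1, htt.2, ht.1, ht.2]

/-! ### Total boundedness of orbits -/

section Orbit

variable {d : ℕ} {op : Metric.sphere (0 : Euc d) 1 → Set (Euc d) → Set (Euc d)}

lemma sphere_norm (s : Metric.sphere (0 : Euc d) 1) : ‖(s : Euc d)‖ = 1 := by
  simp

/-- Successive symmetrization along the list `l` of directions. -/
def iter (op : Metric.sphere (0 : Euc d) 1 → Set (Euc d) → Set (Euc d))
    (l : List (Metric.sphere (0 : Euc d) 1)) (X : Set (Euc d)) : Set (Euc d) :=
  l.foldl (fun B s => op s B) X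

lemma iter_measurable (hop : IsSteinerOp op) (l : List (Metric.sphere (0 : Euc d) 1))
    {X : Set (Euc d)} (hX : MeasurableSet X) : MeasurableSet (iter op l X) := by
  induction l generalizing X with
  | nil => exact hX
  | cons s l ih => exact ih (hop s X hX).1

lemma iter_volume (hop : IsSteinerOp op) (l : List (Metric.sphere (0 : Euc d) 1))
    {X : Set (Euc d)} (hX : MeasurableSet X) : volume (iter op l X) = volume X := by
  induction l generalizing X with
  | nil => rfl
  | cons s l ih =>
    exact (ih (hop s X hX).1).trans ((hop s X hX).volume_eq (sphere_norm s) hX)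

lemma iter_symmDiff_le (hop : IsSteinerOp op) (l : List (Metric.sphere (0 : Euc d) 1))
    {X Y : Set (Euc d)} (hX : MeasurableSet X) (hY : MeasurableSet Y) :
    volume (symmDiff (iter op l X) (iter op l Y)) ≤ volume (symmDiff X Y) := by
  induction l generalizing X Y with
  | nil => exact le_rfl
  | cons s l ih =>
    exact (ih (hop s X hX).1 (hop s Y hY).1).trans
      ((hop s X hX).symmDiff_le (sphere_norm s) hX hY (hop s Y hY))

lemma op_subset_ball (hop : IsSteinerOp op) (s : Metric.sphere (0 : Euc d) 1) {X : Set (Euc d)}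
    (hX : MeasurableSet X) {R : ℝ} (hR : X ⊆ Metric.ball 0 R) : op s X ⊆ Metric.ball 0 R :=
  (hop s X hX).mono_set (sphere_norm s) (steiner_ball (sphere_norm s) R) hR

lemma iter_subset_ball (hop : IsSteinerOp op) (l : List (Metric.sphere (0 : Euc d) 1))
    {X : Set (Euc d)} (hX : MeasurableSet X) {R : ℝ} (hR : X ⊆ Metric.ball 0 R) :
    iter op l X ⊆ Metric.ball 0 R := by
  induction l generalizing X with
  | nil => exact hR
  | cons s l ih => exact ih (hop s X hX).1 (op_subset_ball hop s hX hR)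

lemma iter_thickening (hop : IsSteinerOp op) (l : List (Metric.sphere (0 : Euc d) 1))
    {X X' : Set (Euc d)} (hX : MeasurableSet X) (hX' : MeasurableSet X') {R ε : ℝ}
    (hR : X ⊆ Metric.ball 0 R) (h : Metric.thickening ε X ⊆ X') :
    Metric.thickening ε (iter op l X) ⊆ iter op l X' := by
  induction l generalizing X X' with
  | nil => exact h
  | cons s l ih =>
    exact ih (hop s X hX).1 (hop s X' hX').1 (op_subset_ball hop s hX hR)
      ((hop s X hX).thickening_subset (sphere_norm s) (hop s X' hX') hR h)

/-- Orbits are totally bounded. Up to a small error the set is compact, and the measure of a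
`δ`-neighbourhood of its iterates exceeds that of the iterates by a uniformly small amount; so each
iterate is close to the union of those balls of a finite cover that it meets. -/
lemma orbit_totallyBounded (hop : IsSteinerOp op) {X : Set (Euc d)} (hX : MeasurableSet X)
    (hXf : volume X < ⊤) {ε : ENNReal} (hε : 0 < ε) :
    ∃ N : Set (Set (Euc d)), N.Finite ∧ ∀ l, ∃ Y ∈ N, volume (symmDiff (iter op l X) Y) < ε := by
  have hε2 : 0 < ε / 2 := ENNReal.half_pos hε.ne'
  obtain ⟨K, hKX, hK, hKvol⟩ := hX.exists_isCompact_lt_add hXf.ne hε2.ne'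
  have hKm : MeasurableSet K := hK.measurableSet
  have hKf : volume K ≠ ⊤ := hK.measure_lt_top.ne
  have hXK : volume (symmDiff X K) < ε / 2 := by
    rw [symmDiff_comm, symmDiff_of_le hKX,
      measure_sdiff hKX hKm.nullMeasurableSet hKf]
    exact ENNReal.sub_lt_of_lt_add (measure_mono hKX) (by rwa [add_comm])
  -- a neighbourhood of `K` of almost the same measure
  obtain ⟨δ, hδ, hδvol⟩ : ∃ δ : ℝ, 0 < δ ∧
      volume (Metric.thickening δ K) < volume K + ε / 2 := by
    have ht := (tendsto_measure_cthickening_of_isCompact (μ := volume) hK).eventually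
      (gt_mem_nhds (ENNReal.lt_add_right hKf hε2.ne'))
    obtain ⟨η, hη, H⟩ := Metric.eventually_nhds_iff.1 ht
    refine ⟨η / 2, by positivity, ?_⟩
    refine (measure_mono (Metric.thickening_subset_cthickening _ _)).trans_lt (H ?_)
    rw [Real.dist_0_eq_abs, abs_of_pos (by positivity)]
    linarith
  obtain ⟨R, hR⟩ := hK.isBounded.subset_ball 0
  have htb : TotallyBounded (Metric.ball (0 : Euc d) R) :=
    (isCompact_closedBall (0 : Euc d) R).totallyBounded.subset Metric.ball_subset_closedBall
  obtain ⟨C, hCfin, hC⟩ := Metric.totallyBounded_iff.1 htb (δ / 2) (by positivity)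
  refine ⟨(fun D : Set (Euc d) => ⋃ y ∈ D, Metric.ball y (δ / 2)) '' C.powerset,
    hCfin.finite_subsets.image _, fun l => ?_⟩
  set Z := iter op l K with hZ
  have hZm : MeasurableSet Z := iter_measurable hop l hKm
  have hZvol : volume Z = volume K := iter_volume hop l hKm
  -- the balls of the cover that `Z` meets: their union lies between `Z` and its `δ`-neighbourhood
  set D := {y ∈ C | (Metric.ball y (δ / 2) ∩ Z).Nonempty} with hD
  refine ⟨_, ⟨D, fun y hy => hy.1, rfl⟩, ?_⟩
  set Y := ⋃ y ∈ D, Metric.ball y (δ / 2) with hY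
  have hZY : Z ⊆ Y := by
    intro z hz
    obtain ⟨y, hy, hzy⟩ := Set.mem_iUnion₂.1 (hC (iter_subset_ball hop l hKm hR hz))
    exact Set.mem_iUnion₂.2 ⟨y, ⟨hy, z, hzy, hz⟩, hzy⟩
  have hYZ : Y ⊆ iter op l (Metric.thickening δ K) := by
    refine Set.Subset.trans ?_ (iter_thickening hop l hKm Metric.isOpen_thickening.measurableSet hR
      (le_refl (Metric.thickening δ K)))
    intro p hp
    obtain ⟨y, ⟨hy, z, hzy, hz⟩, hpy⟩ := Set.mem_iUnion₂.1 hp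
    refine Metric.mem_thickening_iff.2 ⟨z, hz, ?_⟩
    rw [Metric.mem_ball] at hzy hpy
    rw [dist_comm] at hzy
    linarith [dist_triangle p y z]
  have hYvol : volume Y < volume K + ε / 2 := by
    refine (measure_mono hYZ).trans_lt ?_
    rw [iter_volume hop l Metric.isOpen_thickening.measurableSet]
    exact hδvol
  have hZYd : volume (symmDiff Z Y) < ε / 2 := by
    rw [symmDiff_of_le hZY,
      measure_sdiff hZY hZm.nullMeasurableSet (by rw [hZvol]; exact hKf), hZvol]
    refine ENNReal.sub_lt_of_lt_add ?_ (by rwa [add_comm])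
    rw [← hZvol]
    exact measure_mono hZY
  calc volume (symmDiff (iter op l X) Y)
      ≤ volume (symmDiff (iter op l X) Z) + volume (symmDiff Z Y) := measure_symmDiff_le _ _ _
    _ ≤ volume (symmDiff X K) + volume (symmDiff Z Y) :=
        add_le_add (iter_symmDiff_le hop l hX hKm) le_rfl
    _ < ε / 2 + ε / 2 := ENNReal.add_lt_add hXK hZYd
    _ = ε := ENNReal.add_halves ε

end Orbit

/-! ### Completeness -/

/-- Completeness of the metric `m(A Δ B)`: a sequence with summable increments converges to its
upper limit. -/
lemma exists_limit {α : Type*} [MeasurableSpace α] {μ : Measure α} {G : ℕ → Set α}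
    (hG : ∀ n, MeasurableSet (G n)) (hsum : ∑' k, μ (symmDiff (G k) (G (k + 1))) ≠ ⊤) :
    ∃ Y, MeasurableSet Y ∧ Tendsto (fun k => μ (symmDiff (G k) Y)) atTop (𝓝 0) := by
  refine ⟨limsup G atTop, MeasurableSet.measurableSet_limsup hG, ?_⟩
  -- a point outside every increment from `k` on lies in all `G n`, `n ≥ k`, or in none of them
  refine tendsto_of_tendsto_of_tendsto_of_le_of_le tendsto_const_nhds
    (ENNReal.tendsto_sum_nat_add _ hsum) (fun _ => zero_le) fun k => ?_
  refine (measure_mono ?_).trans (measure_iUnion_le _)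
  intro x hx
  by_contra hcon
  have hconst : ∀ j, x ∈ G (k + j) ↔ x ∈ G k := by
    intro j
    induction j with
    | zero => rfl
    | succ j ih =>
      rw [← ih]
      have : x ∉ symmDiff (G (j + k)) (G (j + k + 1)) := fun h =>
        hcon (Set.mem_iUnion.2 ⟨j, h⟩)
      rw [Set.mem_symmDiff] at this
      rw [show k + (j + 1) = j + k + 1 by ring, show k + j = j + k by ring]
      tauto
  have hconst' : ∀ n ≥ k, (x ∈ G n ↔ x ∈ G k) := by
    intro n hn
    obtain ⟨j, rfl⟩ := Nat.exists_eq_add_of_le hn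
    exact hconst j
  have hlim : x ∈ limsup G atTop ↔ x ∈ G k := by
    rw [mem_limsup_iff_frequently_mem]
    constructor
    · intro h
      obtain ⟨n, hn, hx⟩ := (frequently_atTop.1 h) k
      exact (hconst' n hn).1 hx
    · intro h
      rw [frequently_atTop]
      intro a
      exact ⟨max a k, le_max_left _ _, (hconst' _ (le_max_right _ _)).2 h⟩
  rw [Set.mem_symmDiff] at hx
  tauto

/-- A sequence of measurable sets which is totally bounded for `m(A Δ B)` has a convergent
subsequence. The hyperfilter selects, for each `k`, an infinite set of indices of diameter at most
`2⁻¹ ^ k`, compatibly in `k`. -/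
lemma exists_subseq {α : Type*} [MeasurableSpace α] {μ : Measure α} {F : ℕ → Set α}
    (hF : ∀ n, MeasurableSet (F n))
    (htb : ∀ ε : ENNReal, 0 < ε →
      ∃ N : Set (Set α), N.Finite ∧ ∀ n, ∃ Y ∈ N, μ (symmDiff (F n) Y) < ε) :
    ∃ (Y : Set α) (φ : ℕ → ℕ), MeasurableSet Y ∧ StrictMono φ ∧
      Tendsto (fun k => μ (symmDiff (F (φ k)) Y)) atTop (𝓝 0) := by
  have hU : ∀ k : ℕ, ∃ S ∈ hyperfilter ℕ, ∀ i ∈ S, ∀ j ∈ S,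
      μ (symmDiff (F i) (F j)) ≤ 2⁻¹ ^ k := by
    intro k
    have hpos : (0 : ENNReal) < 2⁻¹ ^ k / 2 :=
      ENNReal.half_pos (pow_ne_zero _ (ENNReal.inv_ne_zero.2 ENNReal.ofNat_ne_top))
    obtain ⟨N, hN, H⟩ := htb _ hpos
    have hmem : (⋃ Y ∈ N, {n | μ (symmDiff (F n) Y) < 2⁻¹ ^ k / 2}) ∈ hyperfilter ℕ := by
      refine Filter.mem_of_superset Filter.univ_mem fun n _ => ?_
      obtain ⟨Y, hY, h⟩ := H n
      exact Set.mem_iUnion₂.2 ⟨Y, hY, h⟩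
    obtain ⟨Y, hY, hS⟩ := (Ultrafilter.finite_biUnion_mem_iff hN).1 hmem
    refine ⟨_, hS, fun i hi j hj => ?_⟩
    calc μ (symmDiff (F i) (F j)) ≤ μ (symmDiff (F i) Y) + μ (symmDiff Y (F j)) :=
          measure_symmDiff_le _ _ _
      _ ≤ 2⁻¹ ^ k / 2 + 2⁻¹ ^ k / 2 := by
          rw [symmDiff_comm Y]
          exact add_le_add (le_of_lt hi) (le_of_lt hj)
      _ = 2⁻¹ ^ k := ENNReal.add_halves _
  choose S hS hdiam using hU
  have hfreq : ∀ k : ℕ, ∃ᶠ n in atTop, ∀ j ≤ k, n ∈ S j := by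
    intro k
    have : (⋂ j ∈ Set.Iic k, S j) ∈ hyperfilter ℕ :=
      (Filter.biInter_mem (Set.finite_Iic k)).2 fun j _ => hS j
    have hinf : (⋂ j ∈ Set.Iic k, S j).Infinite := fun hfin =>
      Filter.notMem_hyperfilter_of_finite hfin this
    refine (Nat.frequently_atTop_iff_infinite.2 hinf).mono fun n hn j hj => ?_
    exact Set.mem_iInter₂.1 hn j hj
  obtain ⟨φ, hφ, hφS⟩ := extraction_forall_of_frequently hfreq
  obtain ⟨Y, hY, hlim⟩ := exists_limit (μ := μ) (G := fun k => F (φ k)) (fun k => hF _) (by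
    have : ∑' k, μ (symmDiff (F (φ k)) (F (φ (k + 1)))) ≤ ∑' k : ℕ, (2⁻¹ : ENNReal) ^ k :=
      ENNReal.tsum_le_tsum fun k =>
        hdiam k _ (hφS k k le_rfl) _ (hφS (k + 1) k (Nat.le_succ k))
    refine ne_top_of_le_ne_top ?_ this
    rw [ENNReal.tsum_geometric, ENNReal.one_sub_inv_two, inv_inv]
    exact ENNReal.ofNat_ne_top)
  exact ⟨Y, φ, hY, hφ, hlim⟩

lemma volume_lt_top_of_symmDiff {α : Type*} [MeasurableSpace α] {μ : Measure α} {A B : Set α}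
    (hA : μ A < ⊤) (h : μ (symmDiff A B) < ⊤) : μ B < ⊤ := by
  refine lt_of_le_of_lt (measure_mono (t := A ∪ symmDiff A B) ?_) (measure_union_lt_top hA h)
  intro x hx
  by_cases hxA : x ∈ A
  · exact Or.inl hxA
  · exact Or.inr (Or.inr ⟨hx, hxA⟩)

/-! ### Steiner symmetrizations as a symmetrization space -/

/-- Steiner symmetrizations on `(ℳ(ℝ^d), d₁)` form a `⋆`-compatible
symmetrization space with compact orbit closures, and `J` is a `⋆`-compatible strict
asymmetry function on it. -/
theorem statement12 {d : ℕ} (hd : 1 ≤ d)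
    (op : Metric.sphere (0 : Euc d) 1 → Set (Euc d) → Set (Euc d)) (hop : IsSteinerOp op)
    (star : Set (Euc d) → Set (Euc d)) (hstar : IsSphericalRearrangement star) :
    -- nonexpansiveness
    (∀ (s : Metric.sphere (0 : Euc d) 1) (A B : Set (Euc d)),
      MeasurableSet A → volume A < ⊤ → MeasurableSet B → volume B < ⊤ →
      volume (symmDiff (op s A) (op s B)) ≤ volume (symmDiff A B)) ∧
    -- idempotence (in `ℳ(ℝ^d)`)
    (∀ (s : Metric.sphere (0 : Euc d) 1) (A : Set (Euc d)),
      MeasurableSet A → volume A < ⊤ →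
      volume (symmDiff (op s (op s A)) (op s A)) = 0) ∧
    -- joint continuity of the action in `(X, s)`
    (∀ (A : Set (Euc d)), MeasurableSet A → volume A < ⊤ →
      ∀ (s : Metric.sphere (0 : Euc d) 1) (ε : ℝ), 0 < ε → ∃ δ : ℝ, 0 < δ ∧
        ∀ (B : Set (Euc d)) (t : Metric.sphere (0 : Euc d) 1),
          MeasurableSet B → volume B < ⊤ →
          volume (symmDiff A B) < ENNReal.ofReal δ → dist s t < δ →
          volume (symmDiff (op s A) (op t B)) < ENNReal.ofReal ε) ∧
    -- `⋆`-compatibility of the symmetrization space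
    (∀ (s : Metric.sphere (0 : Euc d) 1) (A : Set (Euc d)),
      MeasurableSet A → volume A < ⊤ →
      volume (symmDiff (star (op s A)) (star A)) = 0 ∧
      volume (symmDiff (op s (star A)) (star A)) = 0) ∧
    (∀ A : Set (Euc d), MeasurableSet A → volume A < ⊤ →
      (∀ s : Metric.sphere (0 : Euc d) 1, volume (symmDiff (op s A) A) = 0) →
      volume (symmDiff A (star A)) = 0) ∧
    -- compact closure of orbits: every sequence in `X^𝒮` has a subsequence converging
    -- in measure to a measurable set of finite measure
    (∀ (X : Set (Euc d)), MeasurableSet X → volume X < ⊤ →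
      ∀ F : ℕ → Set (Euc d), (∀ n, InOrbit op X (F n)) →
        ∃ (Y : Set (Euc d)) (φ : ℕ → ℕ), MeasurableSet Y ∧ volume Y < ⊤ ∧
          StrictMono φ ∧
          Tendsto (fun k => volume (symmDiff (F (φ k)) Y)) atTop (nhds 0)) ∧
    -- `J` is continuous on `(ℳ(ℝ^d), d₁)`
    (∀ A : Set (Euc d), MeasurableSet A → volume A < ⊤ → ∀ ε : ℝ, 0 < ε → ∃ δ : ℝ,
      0 < δ ∧ ∀ B : Set (Euc d), MeasurableSet B → volume B < ⊤ →
        volume (symmDiff A B) < ENNReal.ofReal δ → |asymmetryJ A - asymmetryJ B| < ε) ∧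
    -- `J` decreases along symmetrizations, strictly when the set moves
    (∀ (s : Metric.sphere (0 : Euc d) 1) (A : Set (Euc d)),
      MeasurableSet A → volume A < ⊤ →
      asymmetryJ (op s A) ≤ asymmetryJ A ∧
      (asymmetryJ (op s A) = asymmetryJ A → volume (symmDiff (op s A) A) = 0)) ∧
    -- `J` is `⋆`-compatible
    (∀ A : Set (Euc d), MeasurableSet A → volume A < ⊤ →
      asymmetryJ A ≤ asymmetryJ (star A) → volume (symmDiff A (star A)) = 0) := by
  have hn := sphere_norm (d := d)
  refine ⟨?_, ?_, ?_, ?_, ?_, ?_, ?_, ?_, ?_⟩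
  · intro s A B hA _ hB _
    exact (hop s A hA).symmDiff_le (hn s) hA hB (hop s B hB)
  · intro s A hA _
    have h := hop s A hA
    have : op s (op s A) = op s A :=
      (hop s _ h.1).unique (hn s) h.self fun _ _ => rfl
    rw [this, symmDiff_self]
    exact measure_empty
  · intro A hA hAf s ε hε
    have hε2 : 0 < ε / 2 := by positivity
    obtain ⟨δ, hδ, H⟩ := steiner_continuous_dir (hn s) hA hAf (hop s A hA)
      (ENNReal.ofReal_pos.2 hε2)
    refine ⟨min δ (ε / 2), lt_min hδ hε2, fun B t hB _ hAB hst => ?_⟩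
    have h1 := H t (op t A) (hn t) (hst.trans_le (min_le_left _ _)) (hop t A hA)
    have h2 : volume (symmDiff A B) < ENNReal.ofReal (ε / 2) :=
      hAB.trans_le (ENNReal.ofReal_le_ofReal (min_le_right _ _))
    calc volume (symmDiff (op s A) (op t B))
        ≤ volume (symmDiff (op s A) (op t A)) + volume (symmDiff (op t A) (op t B)) :=
          measure_symmDiff_le _ _ _
      _ ≤ volume (symmDiff (op s A) (op t A)) + volume (symmDiff A B) :=
          add_le_add le_rfl ((hop t A hA).symmDiff_le (hn t) hA hB (hop t B hB))
      _ < ENNReal.ofReal (ε / 2) + ENNReal.ofReal (ε / 2) := ENNReal.add_lt_add h1 h2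
      _ = ENNReal.ofReal ε := by rw [← ENNReal.ofReal_add hε2.le hε2.le, add_halves]
  · intro s A hA hAf
    have h := hop s A hA
    have hv := h.volume_eq (hn s) hA
    obtain ⟨⟨R, hR⟩, hRv⟩ := hstar A hA hAf
    obtain ⟨⟨R', hR'⟩, hRv'⟩ := hstar (op s A) h.1 (by rw [hv]; exact hAf)
    constructor
    · rw [hR, hR']
      apply ball_symmDiff_null
      rw [← hR, ← hR', hRv, hRv', hv]
    · rw [hR]
      have : op s (Metric.ball 0 R) = Metric.ball 0 R :=
        (hop s _ measurableSet_ball).unique (hn s) (steiner_ball (hn s) R) fun _ _ => rfl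
      rw [this, symmDiff_self]
      exact measure_empty
  · intro A hA hAf hfix
    obtain ⟨⟨R, hR⟩, hRv⟩ := hstar A hA hAf
    rw [hR] at hRv ⊢
    refine eq_ball_of_fixed hA hAf hRv fun v hv => ?_
    let s : Metric.sphere (0 : Euc d) 1 := ⟨v, by simpa using hv⟩
    exact ⟨op s A, hop s A hA, hfix s⟩
  · intro X hX hXf F hF
    choose l _ hl using hF
    have hFm : ∀ n, MeasurableSet (F n) := fun n => by
      rw [hl n]; exact iter_measurable hop (l n) hX
    have hFv : ∀ n, volume (F n) < ⊤ := fun n => by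
      rw [hl n]; exact (iter_volume hop (l n) hX).trans_lt hXf
    obtain ⟨Y, φ, hY, hφ, hlim⟩ := exists_subseq (μ := volume) hFm fun ε hε => by
      obtain ⟨N, hN, H⟩ := orbit_totallyBounded hop hX hXf hε
      refine ⟨N, hN, fun n => ?_⟩
      rw [hl n]
      exact H (l n)
    obtain ⟨k, hk⟩ := (hlim.eventually (gt_mem_nhds ENNReal.zero_lt_top)).exists
    exact ⟨Y, φ, hY, volume_lt_top_of_symmDiff (hFv _) hk, hφ, hlim⟩
  · intro A hA hAf ε hε
    refine ⟨ε, hε, fun B hB hBf hAB => (asymmetryJ_dist_le hAf hBf).trans_lt ?_⟩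
    exact (ENNReal.lt_ofReal_iff_toReal_lt (ne_top_of_lt hAB)).1 hAB
  · intro s A hA hAf
    exact asymmetryJ_steiner (hn s) hA hAf (hop s A hA)
  · intro A hA hAf hle
    obtain ⟨⟨R, hR⟩, hRv⟩ := hstar A hA hAf
    rw [hR] at hRv hle ⊢
    exact asymmetryJ_ball hA hAf hRv hle
end
end
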